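/- arXiv:2508.04112 — 4 statements merged into one kernel-verified Lean document; each statement's English description precedes it below -/
import Mathlib

section
/- Let L, T, τ > 0 and let f : ℝ → ℝ be continuously differentiable. Let q₀, q₁, q₂, q₃, q₄ : [0,T] × ℝ → ℝ be C¹ functions, L-periodic in x, satisfying ∂_t q₀ + ∂_x f(q₀) − ∂_x q₄ = 0, τ ∂_t q₁ − ∂_x q₁ + ∂_x q₃ = q₄, τ ∂_t q₂ − ∂_x q₂ = −q₃, τ ∂_t q₃ + ∂_x q₁ = q₂, and τ ∂_t q₄ − ∂_x q₀ = −q₁ on [0,T] × ℝ. Then the energy t ↦ η(q)(t) = ∫₀^L ( ½ q₀(t,x)² + (τ/2) Σ_{i=1}^{4} q_i(t,x)² ) dx is constant on [0,T]. -/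
open MeasureTheory

/-- Partial derivative with respect to the first (time) variable. -/
noncomputable def pdt (u : ℝ → ℝ → ℝ) : ℝ → ℝ → ℝ :=
  fun t x => deriv (fun s => u s x) t

/-- Partial derivative with respect to the second (space) variable. -/
noncomputable def pdx (u : ℝ → ℝ → ℝ) : ℝ → ℝ → ℝ :=
  fun t x => deriv (fun y => u t y) x

/-!
Multiplying the `i`-th equation by `qᵢ` and adding, every source term cancels and every space
derivative becomes exact: `q₀ ∂ₓ f(q₀) = ∂ₓ (q₀ f(q₀) - F(q₀))` with `F' = f`, while the linear
couplings pair up as `q₀ ∂ₓ q₄ + q₄ ∂ₓ q₀ = ∂ₓ (q₀ q₄)` and `q₁ ∂ₓ q₃ + q₃ ∂ₓ q₁ = ∂ₓ (q₁ q₃)`.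
The energy density thus obeys a local conservation law, whose flux cancels between the two ends of
a period.
-/

section ConservationLaw

open Function Set
open scoped Interval

variable {E : Type*} [NormedAddCommGroup E] [NormedSpace ℝ E] {a b t₀ t₁ : ℝ} {e e' g : ℝ → ℝ → E}

lemma intervalIntegral_swap_of_continuousOn {h : ℝ → ℝ → E}
    (hh : ContinuousOn (uncurry h) ([[t₀, t₁]] ×ˢ [[a, b]])) :
    ∫ t in t₀..t₁, ∫ x in a..b, h t x = ∫ x in a..b, ∫ t in t₀..t₁, h t x :=
  intervalIntegral_intervalIntegral_swap <|
    (hh.integrableOn_compact (isCompact_uIcc.prod isCompact_uIcc)).mono_set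
      (prod_mono uIoc_subset_uIcc uIoc_subset_uIcc)

variable [CompleteSpace E]

lemma integral_sub_eq_integral_integral_of_hasDerivAt
    (he : ∀ t ∈ [[t₀, t₁]], ∀ x ∈ [[a, b]], HasDerivAt (fun s => e s x) (e' t x) t)
    (he' : ContinuousOn (uncurry e') ([[t₀, t₁]] ×ˢ [[a, b]])) :
    ∫ x in a..b, (e t₁ x - e t₀ x) = ∫ t in t₀..t₁, ∫ x in a..b, e' t x := by
  rw [intervalIntegral_swap_of_continuousOn he']
  refine intervalIntegral.integral_congr fun x hx => Eq.symm ?_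
  exact intervalIntegral.integral_eq_sub_of_hasDerivAt (fun t ht => he t ht x hx)
    (he'.uncurry_right x hx).intervalIntegrable

theorem integral_eq_of_conservation_law
    (he : ∀ t ∈ [[t₀, t₁]], ∀ x ∈ [[a, b]], HasDerivAt (fun s => e s x) (e' t x) t)
    (he' : ContinuousOn (uncurry e') ([[t₀, t₁]] ×ˢ [[a, b]]))
    (hint : ∀ t ∈ [[t₀, t₁]], IntervalIntegrable (e t) volume a b)
    (hg : ∀ t ∈ [[t₀, t₁]], ∀ x ∈ [[a, b]], HasDerivAt (g t) (-e' t x) x)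
    (hgab : ∀ t ∈ [[t₀, t₁]], g t b = g t a) :
    ∫ x in a..b, e t₁ x = ∫ x in a..b, e t₀ x := by
  have total_rate_eq_zero : ∀ t ∈ [[t₀, t₁]], ∫ x in a..b, e' t x = 0 := fun t ht => by
    have hcont : ContinuousOn (e' t) [[a, b]] := he'.uncurry_left t ht
    rw [← neg_eq_zero, ← intervalIntegral.integral_neg,
      intervalIntegral.integral_eq_sub_of_hasDerivAt (hg t ht) hcont.neg.intervalIntegrable,
      hgab t ht, sub_self]
  rw [← sub_eq_zero,
    ← intervalIntegral.integral_sub (hint t₁ right_mem_uIcc) (hint t₀ left_mem_uIcc),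
    integral_sub_eq_integral_integral_of_hasDerivAt he he',
    intervalIntegral.integral_congr total_rate_eq_zero, intervalIntegral.integral_zero]

end ConservationLaw

section PartialDerivatives

open Function

variable {u : ℝ → ℝ → ℝ} {t x : ℝ}

lemma hasDerivAt_pdt (hu : DifferentiableAt ℝ (uncurry u) (t, x)) :
    HasDerivAt (fun s => u s x) (pdt u t x) t :=
  (hu.comp (f := fun s => (s, x)) t (by fun_prop)).hasDerivAt

lemma hasDerivAt_pdx (hu : DifferentiableAt ℝ (uncurry u) (t, x)) :
    HasDerivAt (u t) (pdx u t x) x :=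
  (hu.comp (f := fun y => (t, y)) x (by fun_prop)).hasDerivAt

lemma pdt_eq_fderiv (hu : DifferentiableAt ℝ (uncurry u) (t, x)) :
    pdt u t x = fderiv ℝ (uncurry u) (t, x) (1, 0) :=
  (hu.hasFDerivAt.comp_hasDerivAt (f := fun s => (s, x)) t
    ((hasDerivAt_id t).prodMk (hasDerivAt_const t x))).deriv

lemma continuous_uncurry_pdt (hu : ContDiff ℝ 1 (uncurry u)) : Continuous (uncurry (pdt u)) := by
  have huncurry : uncurry (pdt u) = fun p => fderiv ℝ (uncurry u) p (1, 0) :=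
    funext fun p => pdt_eq_fderiv (hu.differentiable one_ne_zero p)
  rw [huncurry]
  exact (hu.continuous_fderiv one_ne_zero).clm_apply continuous_const

end PartialDerivatives

/-- The energy density `½ q₀² + (τ/2) (q₁² + q₂² + q₃² + q₄²)` of the hyperbolic system, as a
function of the state; its integral over a period is the energy `η`. -/
noncomputable def kawaharaEnergyDensity (τ q₀ q₁ q₂ q₃ q₄ : ℝ) : ℝ :=
  q₀ ^ 2 / 2 + τ / 2 * (q₁ ^ 2 + q₂ ^ 2 + q₃ ^ 2 + q₄ ^ 2)

/-- The flux transporting `kawaharaEnergyDensity`, as a function of the state, normalized so that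
`∂ₜ density + ∂ₓ flux = 0` along solutions. The integral is the primitive of `f` vanishing
at `0`. -/
noncomputable def kawaharaEnergyFlux (f : ℝ → ℝ) (q₀ q₁ q₂ q₃ q₄ : ℝ) : ℝ :=
  q₀ * f q₀ - (∫ z in (0 : ℝ)..q₀, f z) - q₀ * q₄ - q₁ ^ 2 / 2 + q₁ * q₃ - q₂ ^ 2 / 2

/-- The five equations of the hyperbolic approximation with relaxation parameter `τ`, at the single
space-time point `(t, x)`. -/
structure KawaharaSystemAt (τ : ℝ) (f : ℝ → ℝ) (q₀ q₁ q₂ q₃ q₄ : ℝ → ℝ → ℝ) (t x : ℝ) : Prop where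
  eq₀ : pdt q₀ t x + pdx (fun s y => f (q₀ s y)) t x - pdx q₄ t x = 0
  eq₁ : τ * pdt q₁ t x - pdx q₁ t x + pdx q₃ t x = q₄ t x
  eq₂ : τ * pdt q₂ t x - pdx q₂ t x = -q₃ t x
  eq₃ : τ * pdt q₃ t x + pdx q₁ t x = q₂ t x
  eq₄ : τ * pdt q₄ t x - pdx q₀ t x = -q₁ t x

section StateDerivatives

variable {u₀ u₁ u₂ u₃ u₄ : ℝ → ℝ} {u₀' u₁' u₂' u₃' u₄' s : ℝ}

lemma hasDerivAt_kawaharaEnergyDensity (τ : ℝ)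
    (h₀ : HasDerivAt u₀ u₀' s) (h₁ : HasDerivAt u₁ u₁' s) (h₂ : HasDerivAt u₂ u₂' s)
    (h₃ : HasDerivAt u₃ u₃' s) (h₄ : HasDerivAt u₄ u₄' s) :
    HasDerivAt (fun r => kawaharaEnergyDensity τ (u₀ r) (u₁ r) (u₂ r) (u₃ r) (u₄ r))
      (u₀ s * u₀' + τ * (u₁ s * u₁' + u₂ s * u₂' + u₃ s * u₃' + u₄ s * u₄')) s := by
  refine (((h₀.pow 2).div_const 2).add
    (((((h₁.pow 2).add (h₂.pow 2)).add (h₃.pow 2)).add (h₄.pow 2)).const_mul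
      (τ / 2))).congr_deriv ?_
  simp only [Nat.cast_ofNat, Nat.add_one_sub_one, pow_one]
  ring

lemma hasDerivAt_mul_sub_primitive {f : ℝ → ℝ} {φ' : ℝ} (hf : Continuous f)
    (hu : HasDerivAt u₀ u₀' s) (hφ : HasDerivAt (fun r => f (u₀ r)) φ' s) :
    HasDerivAt (fun r => u₀ r * f (u₀ r) - ∫ z in (0 : ℝ)..u₀ r, f z) (u₀ s * φ') s := by
  have hF : HasDerivAt (fun r => ∫ z in (0 : ℝ)..u₀ r, f z) (f (u₀ s) * u₀') s :=
    (hf.integral_hasStrictDerivAt 0 (u₀ s)).hasDerivAt.comp s hu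
  exact ((hu.mul hφ).sub hF).congr_deriv (by ring)

lemma hasDerivAt_kawaharaEnergyFlux {f : ℝ → ℝ} {φ' : ℝ} (hf : Continuous f)
    (hφ : HasDerivAt (fun r => f (u₀ r)) φ' s)
    (h₀ : HasDerivAt u₀ u₀' s) (h₁ : HasDerivAt u₁ u₁' s) (h₂ : HasDerivAt u₂ u₂' s)
    (h₃ : HasDerivAt u₃ u₃' s) (h₄ : HasDerivAt u₄ u₄' s) :
    HasDerivAt (fun r => kawaharaEnergyFlux f (u₀ r) (u₁ r) (u₂ r) (u₃ r) (u₄ r))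
      (u₀ s * φ' - (u₀' * u₄ s + u₀ s * u₄') - u₁ s * u₁' + (u₁' * u₃ s + u₁ s * u₃')
        - u₂ s * u₂') s := by
  refine (((((hasDerivAt_mul_sub_primitive hf h₀ hφ).sub (h₀.mul h₄)).sub
    ((h₁.pow 2).div_const 2)).add (h₁.mul h₃)).sub ((h₂.pow 2).div_const 2)).congr_deriv ?_
  simp only [Nat.cast_ofNat, Nat.add_one_sub_one, pow_one]
  ring

end StateDerivatives

section Energy

open Function Set
open scoped Interval

variable {τ : ℝ} {f : ℝ → ℝ} {q₀ q₁ q₂ q₃ q₄ : ℝ → ℝ → ℝ}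

lemma KawaharaSystemAt.hasDerivAt_energyFlux {t x : ℝ}
    (hq : KawaharaSystemAt τ f q₀ q₁ q₂ q₃ q₄ t x) (hf : Differentiable ℝ f)
    (hq₀ : DifferentiableAt ℝ (uncurry q₀) (t, x)) (hq₁ : DifferentiableAt ℝ (uncurry q₁) (t, x))
    (hq₂ : DifferentiableAt ℝ (uncurry q₂) (t, x)) (hq₃ : DifferentiableAt ℝ (uncurry q₃) (t, x))
    (hq₄ : DifferentiableAt ℝ (uncurry q₄) (t, x)) :
    HasDerivAt (fun y => kawaharaEnergyFlux f (q₀ t y) (q₁ t y) (q₂ t y) (q₃ t y) (q₄ t y))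
      (-pdt (fun s y => kawaharaEnergyDensity τ (q₀ s y) (q₁ s y) (q₂ s y) (q₃ s y) (q₄ s y)) t x)
      x := by
  have hφ : HasDerivAt (fun y => f (q₀ t y)) (pdx (fun s y => f (q₀ s y)) t x) x :=
    ((hf (q₀ t x)).comp x (hasDerivAt_pdx hq₀).differentiableAt).hasDerivAt
  have hdensity := hasDerivAt_kawaharaEnergyDensity τ (hasDerivAt_pdt hq₀) (hasDerivAt_pdt hq₁)
    (hasDerivAt_pdt hq₂) (hasDerivAt_pdt hq₃) (hasDerivAt_pdt hq₄)
  have hflux := hasDerivAt_kawaharaEnergyFlux hf.continuous hφ (hasDerivAt_pdx hq₀)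
    (hasDerivAt_pdx hq₁) (hasDerivAt_pdx hq₂) (hasDerivAt_pdx hq₃) (hasDerivAt_pdx hq₄)
  refine hflux.congr_deriv (Eq.trans ?_ (congrArg Neg.neg hdensity.deriv.symm))
  linear_combination q₀ t x * hq.eq₀ + q₁ t x * hq.eq₁ + q₂ t x * hq.eq₂ + q₃ t x * hq.eq₃
    + q₄ t x * hq.eq₄

lemma contDiff_kawaharaEnergyDensity {n : WithTop ℕ∞} (τ : ℝ)
    (hq₀ : ContDiff ℝ n (uncurry q₀)) (hq₁ : ContDiff ℝ n (uncurry q₁))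
    (hq₂ : ContDiff ℝ n (uncurry q₂)) (hq₃ : ContDiff ℝ n (uncurry q₃))
    (hq₄ : ContDiff ℝ n (uncurry q₄)) :
    ContDiff ℝ n (uncurry fun t x =>
      kawaharaEnergyDensity τ (q₀ t x) (q₁ t x) (q₂ t x) (q₃ t x) (q₄ t x)) :=
  ((hq₀.pow 2).div_const 2).add (contDiff_const.mul
    ((((hq₁.pow 2).add (hq₂.pow 2)).add (hq₃.pow 2)).add (hq₄.pow 2)))

theorem kawahara_hyperbolic_energy_conservation_general {a b t₀ t₁ : ℝ} (hf : Differentiable ℝ f)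
    (hq₀ : ContDiff ℝ 1 (uncurry q₀)) (hq₁ : ContDiff ℝ 1 (uncurry q₁))
    (hq₂ : ContDiff ℝ 1 (uncurry q₂)) (hq₃ : ContDiff ℝ 1 (uncurry q₃))
    (hq₄ : ContDiff ℝ 1 (uncurry q₄))
    (hab₀ : ∀ t ∈ [[t₀, t₁]], q₀ t b = q₀ t a) (hab₁ : ∀ t ∈ [[t₀, t₁]], q₁ t b = q₁ t a)
    (hab₂ : ∀ t ∈ [[t₀, t₁]], q₂ t b = q₂ t a) (hab₃ : ∀ t ∈ [[t₀, t₁]], q₃ t b = q₃ t a)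
    (hab₄ : ∀ t ∈ [[t₀, t₁]], q₄ t b = q₄ t a)
    (hq : ∀ t ∈ [[t₀, t₁]], ∀ x ∈ [[a, b]], KawaharaSystemAt τ f q₀ q₁ q₂ q₃ q₄ t x) :
    ∫ x in a..b, kawaharaEnergyDensity τ (q₀ t₁ x) (q₁ t₁ x) (q₂ t₁ x) (q₃ t₁ x) (q₄ t₁ x) =
      ∫ x in a..b, kawaharaEnergyDensity τ (q₀ t₀ x) (q₁ t₀ x) (q₂ t₀ x) (q₃ t₀ x) (q₄ t₀ x) := by
  have hη := contDiff_kawaharaEnergyDensity τ hq₀ hq₁ hq₂ hq₃ hq₄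
  refine integral_eq_of_conservation_law
    (fun t _ x _ => hasDerivAt_pdt (hη.differentiable one_ne_zero (t, x)))
    (continuous_uncurry_pdt hη).continuousOn
    (fun t _ => (hη.continuous.uncurry_left t).intervalIntegrable a b)
    (fun t ht x hx => (hq t ht x hx).hasDerivAt_energyFlux hf
      (hq₀.differentiable one_ne_zero _) (hq₁.differentiable one_ne_zero _)
      (hq₂.differentiable one_ne_zero _) (hq₃.differentiable one_ne_zero _)
      (hq₄.differentiable one_ne_zero _))
    (fun t ht => ?_)
  rw [hab₀ t ht, hab₁ t ht, hab₂ t ht, hab₃ t ht, hab₄ t ht]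

end Energy

/-- Energy conservation for the energy-consistent hyperbolic approximation of the
Kawahara-type equation `∂_t u + ∂_x f(u) + ∂_x³ u - ∂_x⁵ u = 0`. -/
theorem kawahara_hyperbolic_energy_conservation
    (L T τ : ℝ) (hL : 0 < L) (hT : 0 < T) (hτ : 0 < τ)
    (f : ℝ → ℝ) (hf : ContDiff ℝ 1 f)
    (q₀ q₁ q₂ q₃ q₄ : ℝ → ℝ → ℝ)
    (hq₀ : ContDiff ℝ 1 (Function.uncurry q₀))
    (hq₁ : ContDiff ℝ 1 (Function.uncurry q₁))
    (hq₂ : ContDiff ℝ 1 (Function.uncurry q₂))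
    (hq₃ : ContDiff ℝ 1 (Function.uncurry q₃))
    (hq₄ : ContDiff ℝ 1 (Function.uncurry q₄))
    (hper₀ : ∀ t, Function.Periodic (q₀ t) L)
    (hper₁ : ∀ t, Function.Periodic (q₁ t) L)
    (hper₂ : ∀ t, Function.Periodic (q₂ t) L)
    (hper₃ : ∀ t, Function.Periodic (q₃ t) L)
    (hper₄ : ∀ t, Function.Periodic (q₄ t) L)
    (heq₀ : ∀ t ∈ Set.Icc (0:ℝ) T, ∀ x : ℝ,
      pdt q₀ t x + pdx (fun s y => f (q₀ s y)) t x - pdx q₄ t x = 0)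
    (heq₁ : ∀ t ∈ Set.Icc (0:ℝ) T, ∀ x : ℝ,
      τ * pdt q₁ t x - pdx q₁ t x + pdx q₃ t x = q₄ t x)
    (heq₂ : ∀ t ∈ Set.Icc (0:ℝ) T, ∀ x : ℝ,
      τ * pdt q₂ t x - pdx q₂ t x = - q₃ t x)
    (heq₃ : ∀ t ∈ Set.Icc (0:ℝ) T, ∀ x : ℝ,
      τ * pdt q₃ t x + pdx q₁ t x = q₂ t x)
    (heq₄ : ∀ t ∈ Set.Icc (0:ℝ) T, ∀ x : ℝ,
      τ * pdt q₄ t x - pdx q₀ t x = - q₁ t x) :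
    ∀ t ∈ Set.Icc (0:ℝ) T,
      (∫ x in (0:ℝ)..L,
        (q₀ t x ^ 2 / 2
          + τ / 2 * (q₁ t x ^ 2 + q₂ t x ^ 2 + q₃ t x ^ 2 + q₄ t x ^ 2)))
      = ∫ x in (0:ℝ)..L,
        (q₀ 0 x ^ 2 / 2
          + τ / 2 * (q₁ 0 x ^ 2 + q₂ 0 x ^ 2 + q₃ 0 x ^ 2 + q₄ 0 x ^ 2)) := by
  intro t ht
  have hsub : Set.uIcc 0 t ⊆ Set.Icc 0 T := Set.uIcc_subset_Icc ⟨le_rfl, hT.le⟩ ht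
  exact kawahara_hyperbolic_energy_conservation_general (hf.differentiable one_ne_zero)
    hq₀ hq₁ hq₂ hq₃ hq₄
    (fun s _ => (hper₀ s).eq) (fun s _ => (hper₁ s).eq) (fun s _ => (hper₂ s).eq)
    (fun s _ => (hper₃ s).eq) (fun s _ => (hper₄ s).eq)
    fun s hs x _ => ⟨heq₀ s (hsub hs) x, heq₁ s (hsub hs) x, heq₂ s (hsub hs) x,
      heq₃ s (hsub hs) x, heq₄ s (hsub hs) x⟩
end

section
/- Let τ > 0 and a ∈ ℝ, and let A be the real 5×5 matrix ![![a, 0, 0, 0, −1], ![0, −1/τ, 0, 1/τ, 0], ![0, 0, −1/τ, 0, 0], ![0, 1/τ, 0, 0, 0], ![−1/τ, 0, 0, 0, 0]]. Set λ₁ = −(1+√5)/(2τ), λ₂ = −1/τ, λ₃ = (−1+√5)/(2τ), λ₄ = (a − √(a² + 4/τ))/2, λ₅ = (a + √(a² + 4/τ))/2, and v₁ = (0, τλ₁, 0, 1, 0), v₂ = (0, 0, 1, 0, 0), v₃ = (0, τλ₃, 0, 1, 0), v₄ = (−τλ₄, 0, 0, 0, 1), v₅ = (−τλ₅, 0, 0,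 0, 1). Then A vᵢ = λᵢ vᵢ for i = 1, …, 5, and (v₁, …, v₅) is a basis of ℝ⁵; in particular A is diagonalizable over ℝ. -/
/-!
In the ordering `(q₀, q₄)`, `(q₁, q₃)`, `q₂` of the unknowns, the flux Jacobian is block diagonal
with two `2 × 2` blocks and one `1 × 1` block. Each `2 × 2` block has a quadratic characteristic
polynomial with nonzero discriminant, hence two distinct eigenvalues. Eigenvalues of different
blocks may coincide, so independence of the eigenvectors is read off their determinant, which is
`τ ^ 2` times the product of the eigenvalue differences within the blocks.
-/

open Matrix

section CommRing

variable {R : Type*} [CommRing R]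

/-- The matrix whose rows are the eigenvectors of the flux Jacobian of the hyperbolic Kawahara
system with relaxation parameter `τ`, in terms of its eigenvalues `l`. The rows `0, 2` span the
`(q₁, q₃)` block, the row `1` the `q₂` block and the rows `3, 4` the `(q₀, q₄)` block. -/
def kawaharaEigenvectors (τ : R) (l : Fin 5 → R) : Matrix (Fin 5) (Fin 5) R :=
  !![0, τ * l 0, 0, 1, 0;
     0, 0, 1, 0, 0;
     0, τ * l 2, 0, 1, 0;
     -(τ * l 3), 0, 0, 0, 1;
     -(τ * l 4), 0, 0, 0, 1]

theorem det_kawaharaEigenvectors (τ : R) (l : Fin 5 → R) :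
    (kawaharaEigenvectors τ l).det = τ ^ 2 * ((l 0 - l 2) * (l 3 - l 4)) := by
  simp [kawaharaEigenvectors, det_succ_row_zero, Fin.sum_univ_succ, Fin.succAbove]
  ring

theorem linearIndependent_kawaharaEigenvectors [IsDomain R] {τ : R} (hτ : τ ≠ 0) {l : Fin 5 → R}
    (h₀₂ : l 0 ≠ l 2) (h₃₄ : l 3 ≠ l 4) :
    LinearIndependent R (kawaharaEigenvectors τ l).row := by
  refine linearIndependent_rows_of_det_ne_zero (A := kawaharaEigenvectors τ l) ?_
  rw [det_kawaharaEigenvectors]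
  exact mul_ne_zero (pow_ne_zero 2 hτ) (mul_ne_zero (sub_ne_zero.2 h₀₂) (sub_ne_zero.2 h₃₄))

end CommRing

section Field

variable {K : Type*} [Field K] {τ a r s t : K}

/-- The flux Jacobian of the hyperbolic approximation of the Kawahara equation in the unknowns
`q₀, …, q₄`, with relaxation parameter `τ`, at a state where the flux has derivative `a`. -/
def kawaharaFluxJacobian (τ a : K) : Matrix (Fin 5) (Fin 5) K :=
  !![a, 0, 0, 0, -1;
     0, -1 / τ, 0, 1 / τ, 0;
     0, 0, -1 / τ, 0, 0;
     0, 1 / τ, 0, 0, 0;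
     -1 / τ, 0, 0, 0, 0]

/-- The eigenvalues of the flux Jacobian `kawaharaFluxJacobian τ a`, where `r` and `s` stand for
chosen square roots of `5` and of `a ^ 2 + 4 / τ`. -/
def kawaharaEigenvalues (τ a r s : K) : Fin 5 → K :=
  ![-(1 + r) / (2 * τ), -1 / τ, (-1 + r) / (2 * τ), (a - s) / 2, (a + s) / 2]

theorem kawaharaFluxJacobian_mulVec_q₁_q₃ (hτ : τ ≠ 0) (ht : τ * t ^ 2 + t = 1 / τ) :
    kawaharaFluxJacobian τ a *ᵥ ![0, τ * t, 0, 1, 0] = t • ![0, τ * t, 0, 1, 0] := by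
  have q₁_eq : -1 / τ * (τ * t) + 1 / τ = t * (τ * t) := by
    rw [← ht]
    field_simp
    ring
  have q₃_eq : 1 / τ * (τ * t) = t := by field_simp
  ext i
  fin_cases i <;>
    simp [kawaharaFluxJacobian, mulVec, dotProduct, Fin.sum_univ_five, -one_div, q₁_eq, q₃_eq]

theorem kawaharaFluxJacobian_mulVec_q₂ (τ a : K) :
    kawaharaFluxJacobian τ a *ᵥ ![0, 0, 1, 0, 0] = (-1 / τ) • ![0, 0, 1, 0, 0] := by
  ext i
  fin_cases i <;> simp [kawaharaFluxJacobian, mulVec, dotProduct, Fin.sum_univ_five]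

theorem kawaharaFluxJacobian_mulVec_q₀_q₄ (hτ : τ ≠ 0) (ht : t ^ 2 = a * t + 1 / τ) :
    kawaharaFluxJacobian τ a *ᵥ ![-(τ * t), 0, 0, 0, 1] = t • ![-(τ * t), 0, 0, 0, 1] := by
  have q₀_eq : a * -(τ * t) + -1 = t * -(τ * t) := by
    field_simp at ht
    linear_combination ht
  have q₄_eq : -1 / τ * -(τ * t) = t := by field_simp
  ext i
  fin_cases i <;>
    simp [kawaharaFluxJacobian, mulVec, dotProduct, Fin.sum_univ_five, -mul_neg, q₀_eq, q₄_eq]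

theorem kawahara_root_q₁_q₃ [NeZero (2 : K)] (hτ : τ ≠ 0) (hr : r ^ 2 = 5) :
    τ * ((-1 + r) / (2 * τ)) ^ 2 + (-1 + r) / (2 * τ) = 1 / τ := by
  field_simp
  linear_combination hr

theorem kawahara_root_q₀_q₄ [NeZero (2 : K)] (hs : s ^ 2 = a ^ 2 + 4 / τ) :
    ((a + s) / 2) ^ 2 = a * ((a + s) / 2) + 1 / τ := by
  field_simp
  linear_combination hs

theorem kawaharaFluxJacobian_mulVec_kawaharaEigenvectors [NeZero (2 : K)] (hτ : τ ≠ 0)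
    (hr : r ^ 2 = 5) (hs : s ^ 2 = a ^ 2 + 4 / τ) (i : Fin 5) :
    kawaharaFluxJacobian τ a *ᵥ kawaharaEigenvectors τ (kawaharaEigenvalues τ a r s) i =
      kawaharaEigenvalues τ a r s i • kawaharaEigenvectors τ (kawaharaEigenvalues τ a r s) i := by
  have root₀ : τ * (-(1 + r) / (2 * τ)) ^ 2 + -(1 + r) / (2 * τ) = 1 / τ := by
    simpa only [neg_add] using kawahara_root_q₁_q₃ hτ ((neg_sq r).trans hr)
  have root₃ : ((a - s) / 2) ^ 2 = a * ((a - s) / 2) + 1 / τ := by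
    simpa only [sub_eq_add_neg] using kawahara_root_q₀_q₄ ((neg_sq s).trans hs)
  fin_cases i
  · exact kawaharaFluxJacobian_mulVec_q₁_q₃ hτ root₀
  · exact kawaharaFluxJacobian_mulVec_q₂ τ a
  · exact kawaharaFluxJacobian_mulVec_q₁_q₃ hτ (kawahara_root_q₁_q₃ hτ hr)
  · exact kawaharaFluxJacobian_mulVec_q₀_q₄ hτ root₃
  · exact kawaharaFluxJacobian_mulVec_q₀_q₄ hτ (kawahara_root_q₀_q₄ hs)

theorem kawaharaEigenvalues_zero_ne_two [NeZero (2 : K)] (hτ : τ ≠ 0) (hr : r ≠ 0) :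
    kawaharaEigenvalues τ a r s 0 ≠ kawaharaEigenvalues τ a r s 2 := by
  have gap : kawaharaEigenvalues τ a r s 2 - kawaharaEigenvalues τ a r s 0 = r / τ := by
    simp only [kawaharaEigenvalues, cons_val]
    field
  exact (sub_ne_zero.1 (gap ▸ div_ne_zero hr hτ)).symm

theorem kawaharaEigenvalues_three_ne_four [NeZero (2 : K)] (hs : s ≠ 0) :
    kawaharaEigenvalues τ a r s 3 ≠ kawaharaEigenvalues τ a r s 4 := by
  have gap : kawaharaEigenvalues τ a r s 4 - kawaharaEigenvalues τ a r s 3 = s := by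
    simp only [kawaharaEigenvalues, cons_val]
    field
  exact (sub_ne_zero.1 (gap.symm ▸ hs)).symm

theorem kawahara_hyperbolic_flux_jacobian_diagonalizable_general [NeZero (2 : K)] (hτ : τ ≠ 0)
    (hr : r ^ 2 = 5) (hr₀ : r ≠ 0) (hs : s ^ 2 = a ^ 2 + 4 / τ) (hs₀ : s ≠ 0) :
    let l := kawaharaEigenvalues τ a r s
    let v := (kawaharaEigenvectors τ l).row
    (∀ i, kawaharaFluxJacobian τ a *ᵥ v i = l i • v i) ∧
      LinearIndependent K v ∧
      Submodule.span K (Set.range v) = ⊤ := by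
  intro l v
  have hv : LinearIndependent K v :=
    linearIndependent_kawaharaEigenvectors hτ
      (kawaharaEigenvalues_zero_ne_two hτ hr₀) (kawaharaEigenvalues_three_ne_four hs₀)
  exact ⟨kawaharaFluxJacobian_mulVec_kawaharaEigenvectors hτ hr hs, hv,
    hv.span_eq_top_of_card_eq_finrank (by simp)⟩

end Field

/-- The flux Jacobian of the proposed hyperbolic approximation of the Kawahara
equation has the five real eigenvalues `λ₁, …, λ₅` with eigenvectors
`v₁, …, v₅`, which form a basis of `ℝ⁵`; in particular it is diagonalizable
over `ℝ`. -/
theorem kawahara_hyperbolic_flux_jacobian_diagonalizable (τ a : ℝ) (hτ : 0 < τ)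
    (A : Matrix (Fin 5) (Fin 5) ℝ)
    (hA : A = !![a, 0, 0, 0, -1;
                 0, -1/τ, 0, 1/τ, 0;
                 0, 0, -1/τ, 0, 0;
                 0, 1/τ, 0, 0, 0;
                 -1/τ, 0, 0, 0, 0])
    (l : Fin 5 → ℝ)
    (hl : l = ![-(1 + Real.sqrt 5) / (2 * τ),
                -1 / τ,
                (-1 + Real.sqrt 5) / (2 * τ),
                (a - Real.sqrt (a ^ 2 + 4 / τ)) / 2,
                (a + Real.sqrt (a ^ 2 + 4 / τ)) / 2])
    (v : Fin 5 → Fin 5 → ℝ)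
    (hv : v = ![![0, τ * l 0, 0, 1, 0],
                ![0, 0, 1, 0, 0],
                ![0, τ * l 2, 0, 1, 0],
                ![-(τ * l 3), 0, 0, 0, 1],
                ![-(τ * l 4), 0, 0, 0, 1]]) :
    (∀ i : Fin 5, A.mulVec (v i) = l i • v i) ∧
      LinearIndependent ℝ v ∧
      Submodule.span ℝ (Set.range v) = ⊤ := by
  subst hA hv hl
  have discrim_pos : 0 < a ^ 2 + 4 / τ := by positivity
  exact kawahara_hyperbolic_flux_jacobian_diagonalizable_general hτ.ne'
    (Real.sq_sqrt (by norm_num)) (by positivity) (Real.sq_sqrt discrim_pos.le) (by positivity)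
end

section
/- Let m ≥ 2 be even, σ₀ = (−1)^{m/2}, L, T > 0, and let f : ℝ → ℝ be C² with f″ bounded. Let u : [0,T] × ℝ → ℝ be smooth, L-periodic in x, with all partial derivatives bounded, solving ∂_t u + ∂_x f(u) + σ₀ ∂_x^m u = 0. Then there exists C > 0 such that for every τ ∈ (0,1] and every C¹ tuple q = (q₀, …, q_{m−1}), L-periodic in x, solving ∂_t q₀ + ∂_x f(q₀) + σ₀ ∂_x q_{m−1} = 0, τ ∂_t q_j + σ₀ (−1)^j ∂_x q_{m−j−1} = σ₀ (−1)^j q_{m−j} for j ∈ {1, …, m/2 − 1}, and τ ∂_t q_j + σ₀ (−1)^{j+m−1} ∂_x q_{m−j−1} = σ₀ (−1)^{j+m−1} q_{m−j} for j ∈ {m/2, …, m−1}, with initial data q_j(0,·) = ∂_x^j u(0,·) for j = 0, …, m−1, one has sup_{t ∈ [0,T]} [ ‖u(t) − q₀(t)‖_{L²(0,L)} + Σ_{j=1}^{m−1} √τ ‖∂_x^j u(t) − q_j(t)‖_{L²(0,L)} ] ≤ C τ. -/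
open MeasureTheory

/-!
Correct the exact solution to first order in `τ`: with the right correctors the residual of the
hyperbolic system drops from order `τ` to order `τ ^ 2` in the relaxation equations, and it is of
order `τ` in the conservation law. Weight the squared corrected errors by the coefficients of their
time derivatives, `1` for `j = 0` and `τ` otherwise. The signs `s j` of the system satisfy
`s (m - 1 - j) = s j`, so the first-order linear terms of the energy balance form a total space
derivative; and `s (m - j) = -s j` for `j ≠ m / 2` while `s (m / 2) = -1`, so the zeroth-order terms
collapse to a dissipative square. The nonlinear flux is a total derivative up to a Taylor remainder,
quadratic in the error. Grönwall's inequality then bounds the integrated energy by a multiple of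
`τ ^ 2`, uniformly in `τ ≤ 1`.
-/

section PartialDerivatives

variable {g : ℝ → ℝ → ℝ}

lemma hasDerivAt_time_fderiv (hg : Differentiable ℝ (Function.uncurry g)) (t x : ℝ) :
    HasDerivAt (fun s => g s x) (fderiv ℝ (Function.uncurry g) (t, x) (1, 0)) t :=
  (hg (t, x)).hasFDerivAt.comp_hasDerivAt (f := fun s => (s, x)) t
    ((hasDerivAt_id t).prodMk (hasDerivAt_const t x))

lemma hasDerivAt_space_fderiv (hg : Differentiable ℝ (Function.uncurry g)) (t x : ℝ) :
    HasDerivAt (g t) (fderiv ℝ (Function.uncurry g) (t, x) (0, 1)) x :=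
  (hg (t, x)).hasFDerivAt.comp_hasDerivAt x ((hasDerivAt_const x t).prodMk (hasDerivAt_id x))

lemma hasDerivAt_pdt_s15 (hg : Differentiable ℝ (Function.uncurry g)) (t x : ℝ) :
    HasDerivAt (fun s => g s x) (pdt g t x) t :=
  (hasDerivAt_time_fderiv hg t x).differentiableAt.hasDerivAt

lemma hasDerivAt_pdx_s15 (hg : Differentiable ℝ (Function.uncurry g)) (t x : ℝ) :
    HasDerivAt (g t) (pdx g t x) x :=
  (hasDerivAt_space_fderiv hg t x).differentiableAt.hasDerivAt

lemma contDiff_pdt {n : WithTop ℕ∞} (hg : ContDiff ℝ (n + 1) (Function.uncurry g)) :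
    ContDiff ℝ n (Function.uncurry (pdt g)) := by
  have hfderiv : Function.uncurry (pdt g) = fun p => fderiv ℝ (Function.uncurry g) p (1, 0) :=
    funext fun p => (hasDerivAt_time_fderiv (hg.differentiable (by simp)) p.1 p.2).deriv
  rw [hfderiv]
  exact (hg.fderiv_right le_rfl).clm_apply contDiff_const

lemma contDiff_pdx {n : WithTop ℕ∞} (hg : ContDiff ℝ (n + 1) (Function.uncurry g)) :
    ContDiff ℝ n (Function.uncurry (pdx g)) := by
  have hfderiv : Function.uncurry (pdx g) = fun p => fderiv ℝ (Function.uncurry g) p (0, 1) :=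
    funext fun p => (hasDerivAt_space_fderiv (hg.differentiable (by simp)) p.1 p.2).deriv
  rw [hfderiv]
  exact (hg.fderiv_right le_rfl).clm_apply contDiff_const

lemma continuous_pdt (hg : ContDiff ℝ 1 (Function.uncurry g)) :
    Continuous (Function.uncurry (pdt g)) :=
  (contDiff_pdt (n := 0) (by simpa using hg)).continuous

lemma continuous_pdx (hg : ContDiff ℝ 1 (Function.uncurry g)) :
    Continuous (Function.uncurry (pdx g)) :=
  (contDiff_pdx (n := 0) (by simpa using hg)).continuous

lemma contDiff_iterate_pdx {n j : ℕ} (hg : ContDiff ℝ (n + j : ℕ) (Function.uncurry g)) :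
    ContDiff ℝ n (Function.uncurry (pdx^[j] g)) := by
  induction j generalizing n with
  | zero => exact hg
  | succ j ih =>
    rw [Function.iterate_succ_apply']
    exact contDiff_pdx (mod_cast ih (n := n + 1) (hg.of_le (by norm_cast; lia)))

lemma periodic_pdt {L : ℝ} (hg : ∀ t, Function.Periodic (g t) L) (t : ℝ) :
    Function.Periodic (pdt g t) L := fun x => by
  simp only [pdt, fun s => hg s x]

lemma periodic_pdx {L : ℝ} (hg : ∀ t, Function.Periodic (g t) L) (t : ℝ) :
    Function.Periodic (pdx g t) L := fun x => by
  change deriv (g t) (x + L) = deriv (g t) x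
  rw [← deriv_comp_add_const, (hg t).funext]

lemma periodic_iterate_pdx {L : ℝ} (hg : ∀ t, Function.Periodic (g t) L) (j : ℕ) (t : ℝ) :
    Function.Periodic (pdx^[j] g t) L := by
  induction j generalizing t with
  | zero => exact hg t
  | succ j ih =>
    rw [Function.iterate_succ_apply']
    exact periodic_pdx ih t

lemma pdx_comp {f : ℝ → ℝ} (hf : Differentiable ℝ f)
    (hg : Differentiable ℝ (Function.uncurry g)) (t x : ℝ) :
    pdx (fun s y => f (g s y)) t x = deriv f (g t x) * pdx g t x :=
  ((hf (g t x)).hasDerivAt.comp x (hasDerivAt_pdx_s15 hg t x)).deriv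

lemma eventually_abs_le_on_rectangle (hg : Continuous (Function.uncurry g)) (a b c d : ℝ) :
    ∀ᶠ R in Filter.atTop, ∀ t ∈ Set.Icc a b, ∀ x ∈ Set.Icc c d, |g t x| ≤ R := by
  obtain ⟨R₀, hR₀⟩ := (isCompact_Icc.prod isCompact_Icc).exists_bound_of_continuousOn
    (hg.continuousOn (s := Set.Icc a b ×ˢ Set.Icc c d))
  filter_upwards [Filter.eventually_ge_atTop R₀] with R hR t ht x hx
  exact (hR₀ (t, x) ⟨ht, hx⟩).trans hR

lemma hasDerivAt_integral_pdt (hg : ContDiff ℝ 1 (Function.uncurry g)) (a b t : ℝ) :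
    HasDerivAt (fun s => ∫ x in a..b, g s x) (∫ x in a..b, pdt g t x) t := by
  obtain ⟨R, hR⟩ := (eventually_abs_le_on_rectangle (continuous_pdt hg)
    (t - 1) (t + 1) (min a b) (max a b)).exists
  have hcont : ∀ s, Continuous (g s) := fun s => hg.continuous.uncurry_left s
  exact (intervalIntegral.hasDerivAt_integral_of_dominated_loc_of_deriv_le
    (bound := fun _ => R) (s := Set.Icc (t - 1) (t + 1))
    (Icc_mem_nhds (by linarith) (by linarith))
    (.of_forall fun s => (hcont s).aestronglyMeasurable)
    ((hcont t).intervalIntegrable a b)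
    ((continuous_pdt hg).uncurry_left t).aestronglyMeasurable
    (.of_forall fun x hx s hs => hR s hs x (Set.Ioc_subset_Icc_self hx)) intervalIntegrable_const
    (.of_forall fun x _ s _ => hasDerivAt_pdt_s15 (hg.differentiable one_ne_zero) s x)).2

lemma integral_pdx (hg : ContDiff ℝ 1 (Function.uncurry g)) (a b t : ℝ) :
    ∫ x in a..b, pdx g t x = g t b - g t a :=
  intervalIntegral.integral_eq_sub_of_hasDerivAt
    (fun x _ => hasDerivAt_pdx_s15 (hg.differentiable one_ne_zero) t x)
    (((continuous_pdx hg).uncurry_left t).intervalIntegrable a b)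

end PartialDerivatives

lemma gronwallBound_mul (c δ K ε x : ℝ) :
    gronwallBound (c * δ) K (c * ε) x = c * gronwallBound δ K ε x := by
  unfold gronwallBound
  split_ifs <;> ring

lemma integral_le_gronwallBound_of_balance_law {e Q : ℝ → ℝ → ℝ} {a b T K B δ : ℝ} (hab : a ≤ b)
    (he : ContDiff ℝ 1 (Function.uncurry e)) (hQ : ContDiff ℝ 1 (Function.uncurry Q))
    (hflux : ∀ t ∈ Set.Icc 0 T, Q t a = Q t b)
    (hrate : ∀ t ∈ Set.Icc 0 T, ∀ x ∈ Set.Icc a b, pdt e t x ≤ pdx Q t x + K * e t x + B)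
    (hδ : ∫ x in a..b, e 0 x ≤ δ) {t : ℝ} (ht : t ∈ Set.Icc 0 T) :
    ∫ x in a..b, e t x ≤ gronwallBound δ K (B * (b - a)) t := by
  have hderiv := hasDerivAt_integral_pdt he a b
  have hbound : ∀ s ∈ Set.Ico 0 T,
      ∫ x in a..b, pdt e s x ≤ K * (∫ x in a..b, e s x) + B * (b - a) := by
    intro s hs
    have hs' := Set.Ico_subset_Icc_self hs
    have hec : Continuous (e s) := he.continuous.uncurry_left s
    have hQc : Continuous (pdx Q s) := (continuous_pdx hQ).uncurry_left s
    have hetc : Continuous (pdt e s) := (continuous_pdt he).uncurry_left s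
    calc ∫ x in a..b, pdt e s x
        ≤ ∫ x in a..b, (pdx Q s x + K * e s x + B) :=
          intervalIntegral.integral_mono_on hab (hetc.intervalIntegrable a b)
            (((hQc.add (hec.const_mul K)).add continuous_const).intervalIntegrable a b)
            (hrate s hs')
      _ = (∫ x in a..b, pdx Q s x) + K * (∫ x in a..b, e s x) + B * (b - a) := by
          rw [intervalIntegral.integral_add (f := fun x => pdx Q s x + K * e s x)
              ((hQc.add (hec.const_mul K)).intervalIntegrable a b) intervalIntegrable_const,
            intervalIntegral.integral_add (hQc.intervalIntegrable a b)
              ((hec.const_mul K).intervalIntegrable a b),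
            intervalIntegral.integral_const_mul, intervalIntegral.integral_const, smul_eq_mul,
            mul_comm B]
      _ = K * (∫ x in a..b, e s x) + B * (b - a) := by
          rw [integral_pdx hQ, hflux s hs', sub_self, zero_add]
  have hgronwall := le_gronwallBound_of_liminf_deriv_right_le
    (fun s _ => (hderiv s).continuousAt.continuousWithinAt)
    (fun s _ _ hr => (hderiv s).hasDerivWithinAt.liminf_right_slope_le hr) hδ hbound t ht
  rwa [sub_zero] at hgronwall

lemma abs_taylor_remainder_le {f : ℝ → ℝ} (hf : Differentiable ℝ f) {K : NNReal}
    (hf' : LipschitzWith K (deriv f)) (a b : ℝ) :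
    |f b - f a - deriv f a * (b - a)| ≤ K * (b - a) ^ 2 := by
  have hslope : ∀ x ∈ Set.uIcc a b, ‖deriv f x - deriv f a‖ ≤ K * |b - a| := fun x hx =>
    (hf'.norm_sub_le x a).trans
      (mul_le_mul_of_nonneg_left (Set.abs_sub_left_of_mem_uIcc hx) K.2)
  have hderiv : ∀ x, HasDerivAt (fun x => f x - deriv f a * x) (deriv f x - deriv f a) x :=
    fun x => (hf x).hasDerivAt.sub (hasDerivAt_const_mul _)
  calc |f b - f a - deriv f a * (b - a)|
      = ‖f b - deriv f a * b - (f a - deriv f a * a)‖ := by rw [Real.norm_eq_abs]; ring_nf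
    _ ≤ K * |b - a| * ‖b - a‖ :=
        (convex_uIcc a b).norm_image_sub_le_of_norm_hasDerivWithin_le
          (fun x _ => (hderiv x).hasDerivWithinAt) hslope Set.left_mem_uIcc Set.right_mem_uIcc
    _ = K * (b - a) ^ 2 := by rw [Real.norm_eq_abs, mul_assoc, abs_mul_abs_self, sq]

/-- The relative entropy flux of the state `b` with respect to the state `a`, for the conservation
law with flux `f` and the entropy `u ^ 2 / 2`. -/
noncomputable def relativeFlux (f : ℝ → ℝ) (a b : ℝ) : ℝ :=
  (b - a) * f b - ∫ z in a..b, f z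

section RelativeFlux

variable {f : ℝ → ℝ} {u v : ℝ → ℝ → ℝ}

lemma relativeFlux_eq (hf : Continuous f) (a b : ℝ) :
    relativeFlux f a b = (b - a) * f b - ((∫ z in 0..b, f z) - ∫ z in 0..a, f z) := by
  rw [relativeFlux, intervalIntegral.integral_interval_sub_left
    (hf.intervalIntegrable _ _) (hf.intervalIntegrable _ _)]

lemma contDiff_relativeFlux (hf : ContDiff ℝ 1 f) (hu : ContDiff ℝ 1 (Function.uncurry u))
    (hv : ContDiff ℝ 1 (Function.uncurry v)) :
    ContDiff ℝ 1 (Function.uncurry fun t x => relativeFlux f (u t x) (v t x)) := by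
  have hprim : ContDiff ℝ 1 fun y => ∫ z in (0 : ℝ)..y, f z := by
    refine contDiff_one_iff_deriv.mpr
      ⟨fun y => (hf.continuous.integral_hasStrictDerivAt 0 y).hasDerivAt.differentiableAt, ?_⟩
    rw [funext fun y => (hf.continuous.integral_hasStrictDerivAt 0 y).hasDerivAt.deriv]
    exact hf.continuous
  simp only [relativeFlux_eq hf.continuous]
  exact ((hv.sub hu).mul (hf.comp hv)).sub ((hprim.comp hv).sub (hprim.comp hu))

lemma pdx_relativeFlux (hf : ContDiff ℝ 1 f) (hu : Differentiable ℝ (Function.uncurry u))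
    (hv : Differentiable ℝ (Function.uncurry v)) (t x : ℝ) :
    pdx (fun s y => relativeFlux f (u s y) (v s y)) t x
      = (v t x - u t x) * (pdx (fun s y => f (v s y)) t x - pdx (fun s y => f (u s y)) t x)
        - (f (v t x) - f (u t x) - deriv f (u t x) * (v t x - u t x)) * pdx u t x := by
  have hf1 : Differentiable ℝ f := hf.differentiable one_ne_zero
  have hux := hasDerivAt_pdx_s15 hu t x
  have hvx := hasDerivAt_pdx_s15 hv t x
  have hprim : ∀ y, HasDerivAt (fun y => ∫ z in (0 : ℝ)..y, f z) (f y) y := fun y =>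
    (hf.continuous.integral_hasStrictDerivAt 0 y).hasDerivAt
  simp only [relativeFlux_eq hf.continuous]
  rw [pdx_comp hf1 hu, pdx_comp hf1 hv]
  refine (((hvx.sub hux).mul ((hf1 _).hasDerivAt.comp x hvx)).sub
    (((hprim _).comp x hvx).sub ((hprim _).comp x hux))).deriv.trans ?_
  simp only [Function.comp_apply, Pi.sub_apply]
  ring

end RelativeFlux

/-- The sign `±1` in front of the spatial terms of the `j`-th equation of the hyperbolic system.
At `j = 0` it is `σ₀ = (-1) ^ (m / 2)`. -/
def systemSign (m j : ℕ) : ℝ :=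
  (-1) ^ (m / 2 + j + if j < m / 2 then 0 else 1)

section SystemSign

variable {m : ℕ}

lemma systemSign_mul_self (m j : ℕ) : systemSign m j * systemSign m j = 1 := by
  rw [systemSign, ← pow_add, Even.neg_one_pow ⟨_, rfl⟩]

lemma abs_systemSign (m j : ℕ) : |systemSign m j| = 1 := by
  rw [systemSign, abs_pow, abs_neg, abs_one, one_pow]

lemma systemSign_of_lt {j : ℕ} (hj : j < m / 2) :
    systemSign m j = (-1) ^ (m / 2) * (-1) ^ j := by
  rw [systemSign, if_pos hj, add_zero, pow_add]

lemma systemSign_of_le (hm : Even m) {j : ℕ} (hj1 : 1 ≤ j) (hj : m / 2 ≤ j) :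
    systemSign m j = (-1) ^ (m / 2) * (-1) ^ (j + m - 1) := by
  rw [systemSign, if_neg hj.not_gt, ← pow_add]
  refine neg_one_pow_congr ?_
  simp only [Nat.even_iff] at hm ⊢
  omega

lemma systemSign_half (m : ℕ) : systemSign m (m / 2) = -1 := by
  rw [systemSign, if_neg (lt_irrefl _), Odd.neg_one_pow ⟨m / 2, by ring⟩]

lemma systemSign_sub {j : ℕ} (hm : Even m) (hjm : j ≤ m) (hj : j ≠ m / 2) :
    systemSign m (m - j) = -systemSign m j := by
  suffices h : systemSign m (m - j) = (-1) * systemSign m j by rw [h, neg_one_mul]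
  simp only [systemSign]
  rw [← pow_succ']
  refine neg_one_pow_congr ?_
  simp only [Nat.even_iff] at hm ⊢
  split_ifs <;> omega

lemma systemSign_reflect (hm : Even m) {j : ℕ} (hj : j < m) :
    systemSign m (m - 1 - j) = systemSign m j := by
  refine neg_one_pow_congr ?_
  simp only [Nat.even_iff] at hm ⊢
  split_ifs <;> omega

lemma sum_systemSign_mul_reflect (hm : Even m) (W X : ℕ → ℝ) :
    ∑ j ∈ Finset.range m, systemSign m j * (X j * W (m - 1 - j))
      = ∑ j ∈ Finset.range m, systemSign m j * (W j * X (m - 1 - j)) := by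
  rw [← Finset.sum_range_reflect]
  refine Finset.sum_congr rfl fun j hj => ?_
  have hjm := Finset.mem_range.mp hj
  rw [systemSign_reflect hm hjm, show m - 1 - (m - 1 - j) = j by lia, mul_comm (X _)]

lemma sum_systemSign_mul_sub (hm : Even m) (hm0 : 0 < m) (W : ℕ → ℝ) :
    ∑ j ∈ Finset.Icc 1 (m - 1), systemSign m j * (W j * W (m - j)) = -W (m / 2) ^ 2 := by
  have hhalf : m / 2 ∈ Finset.Icc 1 (m - 1) := by
    rw [Nat.even_iff] at hm
    rw [Finset.mem_Icc]
    lia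
  have hoff : ∑ j ∈ (Finset.Icc 1 (m - 1)).erase (m / 2),
      systemSign m j * (W j * W (m - j)) = 0 := by
    refine Finset.sum_involution (fun j _ => m - j) ?_ ?_ ?_ ?_
    · intro j hj
      simp only [Finset.mem_erase, Finset.mem_Icc] at hj
      rw [systemSign_sub hm (by lia) hj.1, show m - (m - j) = j by lia]
      ring
    all_goals
      intro j hj
      rw [Nat.even_iff] at hm
      simp only [Finset.mem_erase, Finset.mem_Icc] at hj ⊢
      lia
  rw [← Finset.add_sum_erase _ _ hhalf, hoff, systemSign_half,
    show m - m / 2 = m / 2 by rw [Nat.even_iff] at hm; lia]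
  ring

end SystemSign

lemma sum_range_eq_add_sum_Icc {m : ℕ} (hm : 0 < m) (a : ℕ → ℝ) :
    ∑ j ∈ Finset.range m, a j = a 0 + ∑ j ∈ Finset.Icc 1 (m - 1), a j := by
  rw [Finset.range_eq_Ico, Finset.sum_eq_sum_Ico_succ_bot hm]
  congr 2

lemma lt_of_mem_Icc_one_sub_one {m j : ℕ} (hj : j ∈ Finset.Icc 1 (m - 1)) : j < m := by
  rw [Finset.mem_Icc] at hj
  lia

section Energy

/-- The energy density of a family of error components; the relaxed components carry the
weight `τ` of their time derivatives in the hyperbolic system. -/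
def energyDensity (m : ℕ) (τ : ℝ) (w : ℕ → ℝ → ℝ → ℝ) : ℝ → ℝ → ℝ :=
  fun t x => w 0 t x ^ 2 + ∑ j ∈ Finset.Icc 1 (m - 1), τ * w j t x ^ 2

/-- The quadratic form whose space derivative collects the first-order linear terms of the
hyperbolic system in the energy balance. -/
def reflectionFlux (m : ℕ) (w : ℕ → ℝ → ℝ → ℝ) : ℝ → ℝ → ℝ :=
  fun t x => ∑ j ∈ Finset.range m, systemSign m j * (w j t x * w (m - 1 - j) t x)

variable {m : ℕ} {τ : ℝ} {w : ℕ → ℝ → ℝ → ℝ}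

lemma sq_le_energyDensity (hτ : 0 ≤ τ) (t x : ℝ) : w 0 t x ^ 2 ≤ energyDensity m τ w t x :=
  le_add_of_nonneg_right (Finset.sum_nonneg fun _ _ => mul_nonneg hτ (sq_nonneg _))

lemma mul_sq_le_energyDensity (hτ : 0 ≤ τ) {j : ℕ} (hj : j ∈ Finset.Icc 1 (m - 1)) (t x : ℝ) :
    τ * w j t x ^ 2 ≤ energyDensity m τ w t x :=
  (Finset.single_le_sum (f := fun j => τ * w j t x ^ 2)
    (fun _ _ => mul_nonneg hτ (sq_nonneg _)) hj).trans (le_add_of_nonneg_left (sq_nonneg _))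

lemma contDiff_energyDensity (hm : 0 < m) (hw : ∀ j < m, ContDiff ℝ 1 (Function.uncurry (w j))) :
    ContDiff ℝ 1 (Function.uncurry (energyDensity m τ w)) :=
  ((hw 0 hm).pow 2).add (ContDiff.sum fun j hj =>
    contDiff_const.mul ((hw j (lt_of_mem_Icc_one_sub_one hj)).pow 2))

lemma contDiff_reflectionFlux (hw : ∀ j < m, ContDiff ℝ 1 (Function.uncurry (w j))) :
    ContDiff ℝ 1 (Function.uncurry (reflectionFlux m w)) :=
  ContDiff.sum fun j hj => contDiff_const.mul
    ((hw j (Finset.mem_range.mp hj)).mul (hw (m - 1 - j) (by rw [Finset.mem_range] at hj; lia)))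

lemma pdt_energyDensity (hm : 0 < m) (hw : ∀ j < m, Differentiable ℝ (Function.uncurry (w j)))
    (t x : ℝ) :
    pdt (energyDensity m τ w) t x = 2 * (w 0 t x * pdt (w 0) t x)
      + 2 * ∑ j ∈ Finset.Icc 1 (m - 1), w j t x * (τ * pdt (w j) t x) := by
  have hsq : ∀ j < m, HasDerivAt (fun s => w j s x ^ 2) (2 * w j t x * pdt (w j) t x) t :=
    fun j hj => by simpa using (hasDerivAt_pdt_s15 (hw j hj) t x).fun_pow 2
  refine ((hsq 0 hm).add (HasDerivAt.fun_sum fun j hj =>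
    (hsq j (lt_of_mem_Icc_one_sub_one hj)).const_mul τ)).deriv.trans ?_
  rw [Finset.mul_sum, ← mul_assoc]
  exact congrArg _ (Finset.sum_congr rfl fun j _ => by ring)

lemma pdx_reflectionFlux (hm : Even m) (hw : ∀ j < m, Differentiable ℝ (Function.uncurry (w j)))
    (t x : ℝ) :
    pdx (reflectionFlux m w) t x
      = 2 * ∑ j ∈ Finset.range m, systemSign m j * (w j t x * pdx (w (m - 1 - j)) t x) := by
  have hprod : ∀ j ∈ Finset.range m,
      HasDerivAt (fun y => systemSign m j * (w j t y * w (m - 1 - j) t y))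
        (systemSign m j * (pdx (w j) t x * w (m - 1 - j) t x + w j t x * pdx (w (m - 1 - j)) t x))
        x := fun j hj => by
    rw [Finset.mem_range] at hj
    exact ((hasDerivAt_pdx_s15 (hw j hj) t x).mul
      (hasDerivAt_pdx_s15 (hw (m - 1 - j) (by lia)) t x)).const_mul _
  refine (HasDerivAt.fun_sum hprod).deriv.trans ?_
  simp only [mul_add, Finset.sum_add_distrib]
  rw [sum_systemSign_mul_reflect hm (fun j => w j t x) fun j => pdx (w j) t x, two_mul]

end Energy

/-- `u` is an `L`-periodic classical solution of `∂_t u + ∂_x f(u) + (-1) ^ (m / 2) ∂_x^m u = 0` on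
the time interval `[0, T]`, with the `2 * m` derivatives that the first-order correctors use. -/
structure IsPeriodicSolution (m : ℕ) (L T : ℝ) (f : ℝ → ℝ) (u : ℝ → ℝ → ℝ) : Prop where
  contDiff : ContDiff ℝ (2 * m : ℕ) (Function.uncurry u)
  periodic : ∀ t, Function.Periodic (u t) L
  equation : ∀ t ∈ Set.Icc 0 T, ∀ x,
    pdt u t x + pdx (fun s y => f (u s y)) t x + (-1) ^ (m / 2) * pdx^[m] u t x = 0

/-- `q 0, …, q (m - 1)` is an `L`-periodic classical solution on `[0, T]` of the hyperbolic
approximation with relaxation parameter `τ`, starting from the derivatives of `u` at time `0`.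
The values `q j` with `m ≤ j` are irrelevant. -/
structure IsHyperbolicApproximation (m : ℕ) (L T τ : ℝ) (f : ℝ → ℝ) (u : ℝ → ℝ → ℝ)
    (q : ℕ → ℝ → ℝ → ℝ) : Prop where
  contDiff : ∀ j < m, ContDiff ℝ 1 (Function.uncurry (q j))
  periodic : ∀ j < m, ∀ t, Function.Periodic (q j t) L
  conservation : ∀ t ∈ Set.Icc 0 T, ∀ x,
    pdt (q 0) t x + pdx (fun s y => f (q 0 s y)) t x + (-1) ^ (m / 2) * pdx (q (m - 1)) t x = 0
  relaxation_low : ∀ j ∈ Finset.Icc 1 (m / 2 - 1), ∀ t ∈ Set.Icc 0 T, ∀ x,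
    τ * pdt (q j) t x + (-1) ^ (m / 2) * (-1) ^ j * pdx (q (m - j - 1)) t x
      = (-1) ^ (m / 2) * (-1) ^ j * q (m - j) t x
  relaxation_high : ∀ j ∈ Finset.Icc (m / 2) (m - 1), ∀ t ∈ Set.Icc 0 T, ∀ x,
    τ * pdt (q j) t x + (-1) ^ (m / 2) * (-1) ^ (j + m - 1) * pdx (q (m - j - 1)) t x
      = (-1) ^ (m / 2) * (-1) ^ (j + m - 1) * q (m - j) t x
  initial : ∀ j < m, ∀ x, q j 0 x = pdx^[j] u 0 x

/-- First-order correctors: replacing `∂_x^j u` by `∂_x^j u + τ * corrector m u j` lowers the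
residual of the relaxation equations from order `τ` to order `τ ^ 2`. The recursion solves the
order-`τ` relaxation equation of index `m - 1 - k` for the corrector of index `k + 1`. -/
noncomputable def corrector (m : ℕ) (u : ℝ → ℝ → ℝ) : ℕ → ℝ → ℝ → ℝ
  | 0 => fun _ _ => 0
  | k + 1 => fun t x => pdx (corrector m u k) t x
      + systemSign m (m - 1 - k) * pdt (pdx^[m - 1 - k] u) t x

/-- The error of the hyperbolic approximation relative to the corrected solution. -/
noncomputable def correctedError (m : ℕ) (τ : ℝ) (u : ℝ → ℝ → ℝ) (q : ℕ → ℝ → ℝ → ℝ) (j : ℕ) :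
    ℝ → ℝ → ℝ :=
  fun t x => q j t x - pdx^[j] u t x - τ * corrector m u j t x

section Corrector

variable {m : ℕ} {u : ℝ → ℝ → ℝ}

lemma contDiff_corrector {n k : ℕ} (hu : ContDiff ℝ (n + m + k : ℕ) (Function.uncurry u)) :
    ContDiff ℝ n (Function.uncurry (corrector m u k)) := by
  induction k generalizing n with
  | zero => exact contDiff_const
  | succ k ih =>
    have hcorrector : ContDiff ℝ (n + 1 : ℕ) (Function.uncurry (corrector m u k)) :=
      ih (hu.of_le (by norm_cast; lia))
    have hiterate : ContDiff ℝ (n + 1 : ℕ) (Function.uncurry (pdx^[m - 1 - k] u)) :=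
      contDiff_iterate_pdx (hu.of_le (by norm_cast; lia))
    exact (contDiff_pdx (mod_cast hcorrector)).add
      (contDiff_const.mul (contDiff_pdt (mod_cast hiterate)))

lemma periodic_corrector {L : ℝ} (hu : ∀ t, Function.Periodic (u t) L) (j : ℕ) (t : ℝ) :
    Function.Periodic (corrector m u j t) L := by
  induction j generalizing t with
  | zero => exact fun x => rfl
  | succ j ih =>
    intro x
    simp only [corrector]
    rw [periodic_pdx ih t x, periodic_pdt (periodic_iterate_pdx hu _) t x]

lemma corrector_reflect {j : ℕ} (hj : j < m) (t x : ℝ) :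
    corrector m u (m - j) t x
      = pdx (corrector m u (m - 1 - j)) t x + systemSign m j * pdt (pdx^[j] u) t x := by
  obtain ⟨k, rfl⟩ := Nat.exists_eq_add_of_lt hj
  rw [show j + k + 1 - j = k + 1 by lia, show j + k + 1 - 1 - j = k by lia, corrector,
    show j + k + 1 - 1 - k = j by lia]

end Corrector

section ClassicalSolutions

variable {m : ℕ} {L T τ : ℝ} {f : ℝ → ℝ} {u : ℝ → ℝ → ℝ} {q : ℕ → ℝ → ℝ → ℝ} {j : ℕ}

lemma IsPeriodicSolution.contDiff_one_iterate_pdx (hu : IsPeriodicSolution m L T f u) (hj : j < m) :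
    ContDiff ℝ 1 (Function.uncurry (pdx^[j] u)) :=
  mod_cast contDiff_iterate_pdx (n := 1) (hu.contDiff.of_le (by norm_cast; lia))

lemma IsPeriodicSolution.contDiff_one_corrector (hu : IsPeriodicSolution m L T f u) (hj : j < m) :
    ContDiff ℝ 1 (Function.uncurry (corrector m u j)) :=
  mod_cast contDiff_corrector (n := 1) (hu.contDiff.of_le (by norm_cast; lia))

lemma IsHyperbolicApproximation.relaxation (hq : IsHyperbolicApproximation m L T τ f u q)
    (hm : Even m) (hj : j ∈ Finset.Icc 1 (m - 1)) {t : ℝ} (ht : t ∈ Set.Icc 0 T) (x : ℝ) :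
    τ * pdt (q j) t x + systemSign m j * (pdx (q (m - 1 - j)) t x - q (m - j) t x) = 0 := by
  rw [Finset.mem_Icc] at hj
  rw [Nat.sub_right_comm]
  rcases lt_or_ge j (m / 2) with hlow | hhigh
  · rw [systemSign_of_lt hlow]
    linear_combination hq.relaxation_low j (Finset.mem_Icc.mpr ⟨hj.1, by lia⟩) t ht x
  · rw [systemSign_of_le hm hj.1 hhigh]
    linear_combination hq.relaxation_high j (Finset.mem_Icc.mpr ⟨hhigh, hj.2⟩) t ht x

lemma contDiff_correctedError (hu : IsPeriodicSolution m L T f u)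
    (hq : IsHyperbolicApproximation m L T τ f u q) (hj : j < m) :
    ContDiff ℝ 1 (Function.uncurry (correctedError m τ u q j)) :=
  ((hq.contDiff j hj).sub (hu.contDiff_one_iterate_pdx hj)).sub
    (contDiff_const.mul (hu.contDiff_one_corrector hj))

lemma periodic_correctedError (hu : IsPeriodicSolution m L T f u)
    (hq : IsHyperbolicApproximation m L T τ f u q) (hj : j < m) (t : ℝ) :
    Function.Periodic (correctedError m τ u q j t) L := fun x => by
  simp only [correctedError]
  rw [hq.periodic j hj t x, periodic_iterate_pdx hu.periodic j t x,
    periodic_corrector hu.periodic j t x]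

lemma correctedError_zero (t x : ℝ) : correctedError m τ u q 0 t x = q 0 t x - u t x := by
  simp [correctedError, corrector]

lemma pdt_correctedError (hu : IsPeriodicSolution m L T f u)
    (hq : IsHyperbolicApproximation m L T τ f u q) (hj : j < m) (t x : ℝ) :
    pdt (correctedError m τ u q j) t x
      = pdt (q j) t x - pdt (pdx^[j] u) t x - τ * pdt (corrector m u j) t x :=
  (((hasDerivAt_pdt_s15 ((hq.contDiff j hj).differentiable one_ne_zero) t x).sub
    (hasDerivAt_pdt_s15 ((hu.contDiff_one_iterate_pdx hj).differentiable one_ne_zero) t x)).sub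
    ((hasDerivAt_pdt_s15 ((hu.contDiff_one_corrector hj).differentiable one_ne_zero) t x).const_mul
      τ)).deriv

lemma pdx_correctedError (hu : IsPeriodicSolution m L T f u)
    (hq : IsHyperbolicApproximation m L T τ f u q) (hj : j < m) (t x : ℝ) :
    pdx (correctedError m τ u q j) t x
      = pdx (q j) t x - pdx^[j + 1] u t x - τ * pdx (corrector m u j) t x := by
  rw [Function.iterate_succ_apply']
  exact (((hasDerivAt_pdx_s15 ((hq.contDiff j hj).differentiable one_ne_zero) t x).sub
    (hasDerivAt_pdx_s15 ((hu.contDiff_one_iterate_pdx hj).differentiable one_ne_zero) t x)).sub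
    ((hasDerivAt_pdx_s15 ((hu.contDiff_one_corrector hj).differentiable one_ne_zero) t x).const_mul
      τ)).deriv

lemma correctedError_conservation (hm : Even m) (hm0 : 0 < m) (hu : IsPeriodicSolution m L T f u)
    (hq : IsHyperbolicApproximation m L T τ f u q) {t : ℝ} (ht : t ∈ Set.Icc 0 T) (x : ℝ) :
    pdt (correctedError m τ u q 0) t x
        + (pdx (fun s y => f (q 0 s y)) t x - pdx (fun s y => f (u s y)) t x)
        + systemSign m 0 * pdx (correctedError m τ u q (m - 1)) t x
      = -(τ * (systemSign m 0 * pdx (corrector m u (m - 1)) t x)) := by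
  have hhalf : 0 < m / 2 := by
    rw [Nat.even_iff] at hm
    lia
  have hcorrector : pdt (corrector m u 0) t x = 0 := deriv_const t 0
  rw [pdt_correctedError hu hq hm0, pdx_correctedError hu hq (Nat.sub_one_lt_of_lt hm0),
    Nat.sub_add_cancel hm0, hcorrector, Function.iterate_zero_apply, systemSign_of_lt hhalf,
    pow_zero, mul_one]
  linear_combination hq.conservation t ht x - hu.equation t ht x

lemma correctedError_relaxation (hm : Even m) (hu : IsPeriodicSolution m L T f u)
    (hq : IsHyperbolicApproximation m L T τ f u q) (hj : j ∈ Finset.Icc 1 (m - 1)) {t : ℝ}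
    (ht : t ∈ Set.Icc 0 T) (x : ℝ) :
    τ * pdt (correctedError m τ u q j) t x
        + systemSign m j * (pdx (correctedError m τ u q (m - 1 - j)) t x
          - correctedError m τ u q (m - j) t x)
      = -(τ ^ 2 * pdt (corrector m u j) t x) := by
  have hjm := lt_of_mem_Icc_one_sub_one hj
  rw [pdt_correctedError hu hq hjm, pdx_correctedError hu hq (by lia), correctedError,
    corrector_reflect hjm, show m - 1 - j + 1 = m - j by lia]
  linear_combination hq.relaxation hm hj ht x
    + τ * pdt (pdx^[j] u) t x * systemSign_mul_self m j

end ClassicalSolutions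

/-- The space flux in the balance law of the energy density of the corrected error. -/
noncomputable def energyFlux (m : ℕ) (τ : ℝ) (f : ℝ → ℝ) (u : ℝ → ℝ → ℝ) (q : ℕ → ℝ → ℝ → ℝ) :
    ℝ → ℝ → ℝ :=
  fun t x => -(2 * relativeFlux f (u t x) (q 0 t x)) - reflectionFlux m (correctedError m τ u q) t x

section EnergyBalance

variable {m : ℕ} {L T τ : ℝ} {f : ℝ → ℝ} {u : ℝ → ℝ → ℝ} {q : ℕ → ℝ → ℝ → ℝ}

lemma contDiff_energyFlux (hm : 0 < m) (hf : ContDiff ℝ 1 f) (hu : IsPeriodicSolution m L T f u)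
    (hq : IsHyperbolicApproximation m L T τ f u q) :
    ContDiff ℝ 1 (Function.uncurry (energyFlux m τ f u q)) :=
  (contDiff_const.mul (contDiff_relativeFlux hf (hu.contDiff_one_iterate_pdx hm)
    (hq.contDiff 0 hm))).neg.sub
    (contDiff_reflectionFlux fun _ hj => contDiff_correctedError hu hq hj)

lemma periodic_energyFlux (hm : 0 < m) (hu : IsPeriodicSolution m L T f u)
    (hq : IsHyperbolicApproximation m L T τ f u q) (t : ℝ) :
    Function.Periodic (energyFlux m τ f u q t) L := fun x => by
  have hrefl : reflectionFlux m (correctedError m τ u q) t (x + L)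
      = reflectionFlux m (correctedError m τ u q) t x := by
    refine Finset.sum_congr rfl fun j hj => ?_
    rw [Finset.mem_range] at hj
    rw [periodic_correctedError hu hq hj t x,
      periodic_correctedError hu hq (show m - 1 - j < m by lia) t x]
  simp only [energyFlux]
  rw [hu.periodic t x, hq.periodic 0 hm t x, hrefl]

lemma pdx_energyFlux (hm : Even m) (hm0 : 0 < m) (hf : ContDiff ℝ 1 f)
    (hu : IsPeriodicSolution m L T f u) (hq : IsHyperbolicApproximation m L T τ f u q) (t x : ℝ) :
    pdx (energyFlux m τ f u q) t x
      = -(2 * ((q 0 t x - u t x)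
            * (pdx (fun s y => f (q 0 s y)) t x - pdx (fun s y => f (u s y)) t x)
          - (f (q 0 t x) - f (u t x) - deriv f (u t x) * (q 0 t x - u t x)) * pdx u t x))
        - 2 * ∑ j ∈ Finset.range m, systemSign m j
            * (correctedError m τ u q j t x * pdx (correctedError m τ u q (m - 1 - j)) t x) := by
  have huC : ContDiff ℝ 1 (Function.uncurry u) := hu.contDiff_one_iterate_pdx hm0
  have hqC := hq.contDiff 0 hm0
  have hw : ∀ j < m, ContDiff ℝ 1 (Function.uncurry (correctedError m τ u q j)) :=
    fun j hj => contDiff_correctedError hu hq hj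
  rw [← pdx_relativeFlux hf (huC.differentiable one_ne_zero) (hqC.differentiable one_ne_zero),
    ← pdx_reflectionFlux hm fun j hj => (hw j hj).differentiable one_ne_zero]
  exact (((hasDerivAt_pdx_s15 ((contDiff_relativeFlux hf huC hqC).differentiable one_ne_zero)
    t x).const_mul 2).neg.sub
    (hasDerivAt_pdx_s15 ((contDiff_reflectionFlux hw).differentiable one_ne_zero) t x)).deriv

lemma sum_correctedError_mul_pdt (hm : Even m) (hm0 : 0 < m) (hu : IsPeriodicSolution m L T f u)
    (hq : IsHyperbolicApproximation m L T τ f u q) {t : ℝ} (ht : t ∈ Set.Icc 0 T) (x : ℝ) :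
    ∑ j ∈ Finset.Icc 1 (m - 1),
        correctedError m τ u q j t x * (τ * pdt (correctedError m τ u q j) t x)
      = -correctedError m τ u q (m / 2) t x ^ 2
        - (∑ j ∈ Finset.Icc 1 (m - 1), systemSign m j
            * (correctedError m τ u q j t x * pdx (correctedError m τ u q (m - 1 - j)) t x))
        - ∑ j ∈ Finset.Icc 1 (m - 1),
            correctedError m τ u q j t x * (τ ^ 2 * pdt (corrector m u j) t x) := by
  rw [← sum_systemSign_mul_sub hm hm0 fun j => correctedError m τ u q j t x,
    ← Finset.sum_sub_distrib, ← Finset.sum_sub_distrib]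
  refine Finset.sum_congr rfl fun j hj => ?_
  linear_combination correctedError m τ u q j t x * correctedError_relaxation hm hu hq hj ht x

lemma pdt_energyDensity_correctedError (hm : Even m) (hm0 : 0 < m) (hf : ContDiff ℝ 1 f)
    (hu : IsPeriodicSolution m L T f u) (hq : IsHyperbolicApproximation m L T τ f u q) {t : ℝ}
    (ht : t ∈ Set.Icc 0 T) (x : ℝ) :
    pdt (energyDensity m τ (correctedError m τ u q)) t x
      = pdx (energyFlux m τ f u q) t x - 2 * correctedError m τ u q (m / 2) t x ^ 2
        - 2 * (f (q 0 t x) - f (u t x) - deriv f (u t x) * (q 0 t x - u t x)) * pdx u t x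
        - 2 * τ * (correctedError m τ u q 0 t x
            * (systemSign m 0 * pdx (corrector m u (m - 1)) t x))
        - 2 * ∑ j ∈ Finset.Icc 1 (m - 1),
            correctedError m τ u q j t x * (τ ^ 2 * pdt (corrector m u j) t x) := by
  rw [pdt_energyDensity hm0
      fun j hj => (contDiff_correctedError hu hq hj).differentiable one_ne_zero,
    sum_correctedError_mul_pdt hm hm0 hu hq ht, pdx_energyFlux hm hm0 hf hu hq,
    sum_range_eq_add_sum_Icc hm0, tsub_zero, ← correctedError_zero (m := m) (τ := τ)]
  linear_combination 2 * correctedError m τ u q 0 t x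
    * correctedError_conservation hm hm0 hu hq ht x

end EnergyBalance

/-- `R` bounds, over the time interval `[0, T]` and one period, the functions of the exact solution
that enter the source terms of the energy balance and the distance to the corrected solution. -/
structure IsSolutionBound (m : ℕ) (L T : ℝ) (u : ℝ → ℝ → ℝ) (R : ℝ) : Prop where
  nonneg : 0 ≤ R
  abs_pdx_le : ∀ t ∈ Set.Icc 0 T, ∀ x ∈ Set.Icc 0 L, |pdx u t x| ≤ R
  abs_corrector_le : ∀ j < m, ∀ t ∈ Set.Icc 0 T, ∀ x ∈ Set.Icc 0 L, |corrector m u j t x| ≤ R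
  abs_pdt_corrector_le : ∀ j < m, ∀ t ∈ Set.Icc 0 T, ∀ x ∈ Set.Icc 0 L,
    |pdt (corrector m u j) t x| ≤ R
  abs_pdx_corrector_le : ∀ t ∈ Set.Icc 0 T, ∀ x ∈ Set.Icc 0 L,
    |pdx (corrector m u (m - 1)) t x| ≤ R

lemma IsPeriodicSolution.exists_isSolutionBound {m : ℕ} {L T : ℝ} {f : ℝ → ℝ} {u : ℝ → ℝ → ℝ}
    (hm : 0 < m) (hu : IsPeriodicSolution m L T f u) : ∃ R, IsSolutionBound m L T u R := by
  have hcorrector : ∀ j < m, ∀ᶠ R in Filter.atTop, ∀ t ∈ Set.Icc 0 T, ∀ x ∈ Set.Icc 0 L,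
      |corrector m u j t x| ≤ R := fun j hj =>
    eventually_abs_le_on_rectangle (hu.contDiff_one_corrector hj).continuous 0 T 0 L
  have hpdt : ∀ j < m, ∀ᶠ R in Filter.atTop, ∀ t ∈ Set.Icc 0 T, ∀ x ∈ Set.Icc 0 L,
      |pdt (corrector m u j) t x| ≤ R := fun j hj =>
    eventually_abs_le_on_rectangle (continuous_pdt (hu.contDiff_one_corrector hj)) 0 T 0 L
  have hpdx := eventually_abs_le_on_rectangle
    (continuous_pdx (hu.contDiff_one_iterate_pdx hm)) 0 T 0 L
  have hpdxCorrector := eventually_abs_le_on_rectangle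
    (continuous_pdx (hu.contDiff_one_corrector (Nat.sub_one_lt_of_lt hm))) 0 T 0 L
  obtain ⟨R, hnonneg, hpdx, hpdxCorrector, hcorrector, hpdt⟩ :=
    ((Filter.eventually_ge_atTop 0).and (hpdx.and (hpdxCorrector.and
      (((Set.finite_Iio m).eventually_all.mpr hcorrector).and
        ((Set.finite_Iio m).eventually_all.mpr hpdt))))).exists
  exact ⟨R, hnonneg, hpdx, hcorrector, hpdt, hpdxCorrector⟩

lemma neg_two_mul_mul_le {d R : ℝ} (hd : |d| ≤ R) (a τ : ℝ) :
    -(2 * τ * (a * d)) ≤ a ^ 2 + R ^ 2 * τ ^ 2 := by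
  have hsq : d ^ 2 ≤ R ^ 2 := sq_le_sq' (abs_le.mp hd).1 (abs_le.mp hd).2
  linear_combination sq_nonneg (a + τ * d) + τ ^ 2 * hsq

section EnergyEstimate

variable {m : ℕ} {L T τ R : ℝ} {f : ℝ → ℝ} {K : NNReal} {u : ℝ → ℝ → ℝ} {q : ℕ → ℝ → ℝ → ℝ}

lemma residual_le_energyDensity (hm : 0 < m) (hτ : τ ∈ Set.Ioc 0 1)
    (hR : IsSolutionBound m L T u R) (w : ℕ → ℝ → ℝ → ℝ) {t x : ℝ} (ht : t ∈ Set.Icc 0 T)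
    (hx : x ∈ Set.Icc 0 L) :
    -(2 * τ * (w 0 t x * (systemSign m 0 * pdx (corrector m u (m - 1)) t x)))
        - 2 * ∑ j ∈ Finset.Icc 1 (m - 1), w j t x * (τ ^ 2 * pdt (corrector m u j) t x)
      ≤ energyDensity m τ w t x + m * R ^ 2 * τ ^ 2 := by
  have hzero : |systemSign m 0 * pdx (corrector m u (m - 1)) t x| ≤ R := by
    rw [abs_mul, abs_systemSign, one_mul]
    exact hR.abs_pdx_corrector_le t ht x hx
  have hτ0 := hτ.1.le
  have hrelaxed : ∀ j ∈ Finset.Icc 1 (m - 1),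
      -(2 * (w j t x * (τ ^ 2 * pdt (corrector m u j) t x)))
        ≤ τ * w j t x ^ 2 + R ^ 2 * τ ^ 2 := fun j hj => by
    have hyoung := neg_two_mul_mul_le
      (hR.abs_pdt_corrector_le j (lt_of_mem_Icc_one_sub_one hj) t ht x hx) (w j t x) τ
    linear_combination τ * hyoung + R ^ 2 * τ ^ 2 * hτ.2
  calc -(2 * τ * (w 0 t x * (systemSign m 0 * pdx (corrector m u (m - 1)) t x)))
        - 2 * ∑ j ∈ Finset.Icc 1 (m - 1), w j t x * (τ ^ 2 * pdt (corrector m u j) t x)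
      ≤ (w 0 t x ^ 2 + R ^ 2 * τ ^ 2)
          + ∑ j ∈ Finset.Icc 1 (m - 1), (τ * w j t x ^ 2 + R ^ 2 * τ ^ 2) := by
        rw [sub_eq_add_neg, Finset.mul_sum, ← Finset.sum_neg_distrib]
        exact add_le_add (neg_two_mul_mul_le hzero _ τ) (Finset.sum_le_sum hrelaxed)
    _ = energyDensity m τ w t x + ∑ _j ∈ Finset.range m, R ^ 2 * τ ^ 2 := by
        rw [Finset.sum_add_distrib, sum_range_eq_add_sum_Icc hm, energyDensity]
        ring
    _ = energyDensity m τ w t x + m * R ^ 2 * τ ^ 2 := by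
        rw [Finset.sum_const, Finset.card_range, nsmul_eq_mul, mul_assoc]

lemma pdt_energyDensity_le (hm : Even m) (hm0 : 0 < m) (hτ : τ ∈ Set.Ioc 0 1)
    (hf : Differentiable ℝ f) (hf' : LipschitzWith K (deriv f))
    (hu : IsPeriodicSolution m L T f u) (hR : IsSolutionBound m L T u R)
    (hq : IsHyperbolicApproximation m L T τ f u q) {t x : ℝ} (ht : t ∈ Set.Icc 0 T)
    (hx : x ∈ Set.Icc 0 L) :
    pdt (energyDensity m τ (correctedError m τ u q)) t x
      ≤ pdx (energyFlux m τ f u q) t x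
        + (2 * K * R + 1) * energyDensity m τ (correctedError m τ u q) t x
        + m * R ^ 2 * τ ^ 2 := by
  have htaylor : -((f (q 0 t x) - f (u t x) - deriv f (u t x) * (q 0 t x - u t x)) * pdx u t x)
      ≤ K * R * energyDensity m τ (correctedError m τ u q) t x := by
    calc _ ≤ |f (q 0 t x) - f (u t x) - deriv f (u t x) * (q 0 t x - u t x)| * |pdx u t x| := by
          rw [← abs_mul]
          exact neg_le_abs _
      _ ≤ K * (q 0 t x - u t x) ^ 2 * R :=
          mul_le_mul (abs_taylor_remainder_le hf hf' _ _) (hR.abs_pdx_le t ht x hx)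
            (abs_nonneg _) (by positivity)
      _ = K * R * correctedError m τ u q 0 t x ^ 2 := by rw [correctedError_zero]; ring
      _ ≤ _ := mul_le_mul_of_nonneg_left (sq_le_energyDensity hτ.1.le t x)
          (mul_nonneg K.2 hR.nonneg)
  have hf1 : ContDiff ℝ 1 f := contDiff_one_iff_deriv.mpr ⟨hf, hf'.continuous⟩
  rw [pdt_energyDensity_correctedError hm hm0 hf1 hu hq ht]
  linear_combination 2 * htaylor + 2 * sq_nonneg (correctedError m τ u q (m / 2) t x)
    + residual_le_energyDensity hm0 hτ hR (correctedError m τ u q) ht hx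

lemma energyDensity_initial_le (hm : 0 < m) (hT : 0 ≤ T) (hτ : τ ∈ Set.Ioc 0 1)
    (hR : IsSolutionBound m L T u R) (hq : IsHyperbolicApproximation m L T τ f u q) {x : ℝ}
    (hx : x ∈ Set.Icc 0 L) :
    energyDensity m τ (correctedError m τ u q) 0 x ≤ m * R ^ 2 * τ ^ 2 := by
  have hsq : ∀ j < m, correctedError m τ u q j 0 x ^ 2 ≤ R ^ 2 * τ ^ 2 := fun j hj => by
    rw [correctedError, hq.initial j hj, sub_self, zero_sub, neg_sq, mul_pow, mul_comm]
    have hcorrector := abs_le.mp (hR.abs_corrector_le j hj 0 ⟨le_rfl, hT⟩ x hx)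
    exact mul_le_mul_of_nonneg_right (sq_le_sq' hcorrector.1 hcorrector.2) (sq_nonneg τ)
  calc energyDensity m τ (correctedError m τ u q) 0 x
      ≤ R ^ 2 * τ ^ 2 + ∑ _j ∈ Finset.Icc 1 (m - 1), R ^ 2 * τ ^ 2 :=
        add_le_add (hsq 0 hm) (Finset.sum_le_sum fun j hj =>
          (mul_le_of_le_one_left (sq_nonneg _) hτ.2).trans
            (hsq j (lt_of_mem_Icc_one_sub_one hj)))
    _ = m * R ^ 2 * τ ^ 2 := by
        rw [← sum_range_eq_add_sum_Icc hm fun _ => R ^ 2 * τ ^ 2, Finset.sum_const,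
          Finset.card_range, nsmul_eq_mul, mul_assoc]

lemma integral_energyDensity_le (hm : Even m) (hm0 : 0 < m) (hL : 0 ≤ L) (hτ : τ ∈ Set.Ioc 0 1)
    (hf : Differentiable ℝ f) (hf' : LipschitzWith K (deriv f))
    (hu : IsPeriodicSolution m L T f u) (hR : IsSolutionBound m L T u R)
    (hq : IsHyperbolicApproximation m L T τ f u q) {t : ℝ} (ht : t ∈ Set.Icc 0 T) :
    ∫ x in 0..L, energyDensity m τ (correctedError m τ u q) t x
      ≤ gronwallBound (m * R ^ 2 * L) (2 * K * R + 1) (m * R ^ 2 * L) T * τ ^ 2 := by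
  have he : ContDiff ℝ 1 (Function.uncurry (energyDensity m τ (correctedError m τ u q))) :=
    contDiff_energyDensity hm0 fun j hj => contDiff_correctedError hu hq hj
  have hf1 : ContDiff ℝ 1 f := contDiff_one_iff_deriv.mpr ⟨hf, hf'.continuous⟩
  have hinitial : ∫ x in 0..L, energyDensity m τ (correctedError m τ u q) 0 x
      ≤ τ ^ 2 * (m * R ^ 2 * L) := by
    refine (intervalIntegral.integral_mono_on hL ((he.continuous.uncurry_left 0).intervalIntegrable
      0 L) intervalIntegrable_const fun x hx =>
        energyDensity_initial_le hm0 (ht.1.trans ht.2) hτ hR hq hx).trans_eq ?_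
    rw [intervalIntegral.integral_const, smul_eq_mul]
    ring
  have hgronwall := integral_le_gronwallBound_of_balance_law hL he
    (contDiff_energyFlux hm0 hf1 hu hq)
    (fun s _ => by simpa using (periodic_energyFlux hm0 hu hq s 0).symm)
    (fun s hs x hx => pdt_energyDensity_le hm hm0 hτ hf hf' hu hR hq hs hx) hinitial ht
  rw [sub_zero, show m * R ^ 2 * τ ^ 2 * L = τ ^ 2 * (m * R ^ 2 * L) by ring,
    gronwallBound_mul, mul_comm] at hgronwall
  have hδ : 0 ≤ m * R ^ 2 * L := by positivity
  have hrate : 0 ≤ 2 * K * R + 1 :=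
    add_nonneg (mul_nonneg (mul_nonneg zero_le_two K.2) hR.nonneg) zero_le_one
  exact hgronwall.trans
    (mul_le_mul_of_nonneg_right (gronwallBound_mono hδ hδ hrate ht.2) (sq_nonneg τ))

lemma sq_sub_le_correctedError (hR : IsSolutionBound m L T u R) {j : ℕ} (hj : j < m) {t x : ℝ}
    (ht : t ∈ Set.Icc 0 T) (hx : x ∈ Set.Icc 0 L) :
    (pdx^[j] u t x - q j t x) ^ 2 ≤ 2 * correctedError m τ u q j t x ^ 2 + 2 * R ^ 2 * τ ^ 2 := by
  have hcorrector := abs_le.mp (hR.abs_corrector_le j hj t ht x hx)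
  have hsq := sq_le_sq' hcorrector.1 hcorrector.2
  rw [correctedError]
  linear_combination 2 * τ ^ 2 * hsq
    + sq_nonneg (q j t x - pdx^[j] u t x - 2 * τ * corrector m u j t x)

end EnergyEstimate

lemma sqrt_integral_le_of_le_quadratic {g e : ℝ → ℝ} {L B D τ : ℝ} (hL : 0 ≤ L) (hτ : 0 ≤ τ)
    (hg : Continuous g) (he : Continuous e)
    (hle : ∀ x ∈ Set.Icc 0 L, g x ≤ 2 * e x + B * τ ^ 2) (hint : ∫ x in 0..L, e x ≤ D * τ ^ 2) :
    Real.sqrt (∫ x in 0..L, g x) ≤ Real.sqrt (2 * D + B * L) * τ := by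
  rw [← Real.sqrt_sq hτ, ← Real.sqrt_mul' _ (sq_nonneg τ)]
  refine Real.sqrt_le_sqrt ?_
  calc ∫ x in 0..L, g x
      ≤ ∫ x in 0..L, (2 * e x + B * τ ^ 2) :=
        intervalIntegral.integral_mono_on hL (hg.intervalIntegrable 0 L)
          (((he.const_mul 2).add continuous_const).intervalIntegrable 0 L) hle
    _ = 2 * (∫ x in 0..L, e x) + L * (B * τ ^ 2) := by
        rw [intervalIntegral.integral_add ((he.const_mul 2).intervalIntegrable 0 L)
          intervalIntegrable_const, intervalIntegral.integral_const_mul,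
          intervalIntegral.integral_const, smul_eq_mul, sub_zero]
    _ ≤ (2 * D + B * L) * τ ^ 2 := by linear_combination 2 * hint

section ErrorEstimate

variable {m : ℕ} {L T τ R D : ℝ} {f : ℝ → ℝ} {u : ℝ → ℝ → ℝ} {q : ℕ → ℝ → ℝ → ℝ} {t : ℝ}

lemma sqrt_integral_sq_sub_le (hm : 0 < m) (hL : 0 ≤ L) (hτ : 0 ≤ τ)
    (hu : IsPeriodicSolution m L T f u) (hR : IsSolutionBound m L T u R)
    (hq : IsHyperbolicApproximation m L T τ f u q) (ht : t ∈ Set.Icc 0 T)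
    (henergy : ∫ x in 0..L, energyDensity m τ (correctedError m τ u q) t x ≤ D * τ ^ 2) :
    Real.sqrt (∫ x in 0..L, (u t x - q 0 t x) ^ 2)
      ≤ Real.sqrt (2 * D + 2 * R ^ 2 * L) * τ := by
  have huC : Continuous (u t) := (hu.contDiff_one_iterate_pdx hm).continuous.uncurry_left t
  refine sqrt_integral_le_of_le_quadratic hL hτ
    ((huC.sub ((hq.contDiff 0 hm).continuous.uncurry_left t)).pow 2)
    ((contDiff_energyDensity hm fun j hj =>
      contDiff_correctedError hu hq hj).continuous.uncurry_left t) (fun x hx => ?_) henergy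
  have hsub : (u t x - q 0 t x) ^ 2
      ≤ 2 * correctedError m τ u q 0 t x ^ 2 + 2 * R ^ 2 * τ ^ 2 :=
    sq_sub_le_correctedError hR hm ht hx
  linear_combination hsub + 2 * sq_le_energyDensity (m := m) (w := correctedError m τ u q) hτ t x

lemma sqrt_mul_sqrt_integral_sq_sub_le (hL : 0 ≤ L) (hτ : τ ∈ Set.Ioc 0 1)
    (hu : IsPeriodicSolution m L T f u) (hR : IsSolutionBound m L T u R)
    (hq : IsHyperbolicApproximation m L T τ f u q) (ht : t ∈ Set.Icc 0 T)
    (henergy : ∫ x in 0..L, energyDensity m τ (correctedError m τ u q) t x ≤ D * τ ^ 2) {j : ℕ}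
    (hj : j ∈ Finset.Icc 1 (m - 1)) :
    Real.sqrt τ * Real.sqrt (∫ x in 0..L, (pdx^[j] u t x - q j t x) ^ 2)
      ≤ Real.sqrt (2 * D + 2 * R ^ 2 * L) * τ := by
  have hjm := lt_of_mem_Icc_one_sub_one hj
  have hτ0 := hτ.1.le
  rw [← Real.sqrt_mul hτ0, ← intervalIntegral.integral_const_mul]
  refine sqrt_integral_le_of_le_quadratic hL hτ0
    (((((hu.contDiff_one_iterate_pdx hjm).continuous.uncurry_left t).sub
      ((hq.contDiff j hjm).continuous.uncurry_left t)).pow 2).const_mul τ)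
    ((contDiff_energyDensity (by lia) fun j hj =>
      contDiff_correctedError hu hq hj).continuous.uncurry_left t) (fun x hx => ?_) henergy
  linear_combination τ * sq_sub_le_correctedError (τ := τ) (q := q) hR hjm ht hx
    + 2 * mul_sq_le_energyDensity (w := correctedError m τ u q) hτ0 hj t x
    + 2 * R ^ 2 * τ ^ 2 * hτ.2

end ErrorEstimate

theorem even_order_hyperbolic_convergence_general {m : ℕ} (hm : Even m) (hm0 : 0 < m) {L T : ℝ}
    (hL : 0 ≤ L) {f : ℝ → ℝ} (hf : Differentiable ℝ f) {K : NNReal}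
    (hf' : LipschitzWith K (deriv f)) {u : ℝ → ℝ → ℝ} (hu : IsPeriodicSolution m L T f u) :
    ∃ C > 0, ∀ τ ∈ Set.Ioc 0 1, ∀ q, IsHyperbolicApproximation m L T τ f u q →
      ∀ t ∈ Set.Icc 0 T,
        Real.sqrt (∫ x in 0..L, (u t x - q 0 t x) ^ 2)
          + (∑ j ∈ Finset.Icc 1 (m - 1), Real.sqrt τ *
              Real.sqrt (∫ x in 0..L, (pdx^[j] u t x - q j t x) ^ 2))
          ≤ C * τ := by
  obtain ⟨R, hR⟩ := hu.exists_isSolutionBound hm0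
  let D := gronwallBound (m * R ^ 2 * L) (2 * K * R + 1) (m * R ^ 2 * L) T
  let A := Real.sqrt (2 * D + 2 * R ^ 2 * L)
  have hC : 0 < m * A + 1 :=
    add_pos_of_nonneg_of_pos (mul_nonneg m.cast_nonneg (Real.sqrt_nonneg _)) one_pos
  refine ⟨m * A + 1, hC, fun τ hτ q hq t ht => ?_⟩
  have henergy : ∫ x in 0..L, energyDensity m τ (correctedError m τ u q) t x ≤ D * τ ^ 2 :=
    integral_energyDensity_le hm hm0 hL hτ hf hf' hu hR hq ht
  calc _ ≤ A * τ + ∑ _j ∈ Finset.Icc 1 (m - 1), A * τ :=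
        add_le_add (sqrt_integral_sq_sub_le hm0 hL hτ.1.le hu hR hq ht henergy)
          (Finset.sum_le_sum fun j hj =>
            sqrt_mul_sqrt_integral_sq_sub_le hL hτ hu hR hq ht henergy hj)
    _ = m * A * τ := by
        rw [← sum_range_eq_add_sum_Icc hm0 fun _ => A * τ, Finset.sum_const, Finset.card_range,
          nsmul_eq_mul, mul_assoc]
    _ ≤ (m * A + 1) * τ := by linear_combination hτ.1

/-- Convergence of the generalized even-order hyperbolic approximation of
`∂_t u + ∂_x f(u) + σ₀ ∂_x^m u = 0` with `σ₀ = (-1)^(m/2)` (Theorem 3.3 of the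
paper, for classical solutions of the hyperbolic approximation). -/
theorem even_order_hyperbolic_convergence
    (m : ℕ) (hm : Even m) (hm2 : 2 ≤ m)
    (σ₀ : ℝ) (hσ : σ₀ = (-1 : ℝ) ^ (m / 2))
    (L T : ℝ) (hL : 0 < L) (hT : 0 < T)
    (f : ℝ → ℝ) (hf : ContDiff ℝ 2 f)
    (hf'' : ∃ M, ∀ x : ℝ, |deriv (deriv f) x| ≤ M)
    (u : ℝ → ℝ → ℝ) (hu : ContDiff ℝ (⊤ : ℕ∞) (Function.uncurry u))
    (huper : ∀ t, Function.Periodic (u t) L)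
    (hubd : ∀ i j : ℕ, ∃ M, ∀ t x : ℝ, |pdt^[i] (pdx^[j] u) t x| ≤ M)
    (hueq : ∀ t ∈ Set.Icc (0:ℝ) T, ∀ x : ℝ,
      pdt u t x + pdx (fun s y => f (u s y)) t x + σ₀ * pdx^[m] u t x = 0) :
    ∃ C > 0, ∀ τ ∈ Set.Ioc (0:ℝ) 1, ∀ q : ℕ → ℝ → ℝ → ℝ,
      (∀ j < m, ContDiff ℝ 1 (Function.uncurry (q j))) →
      (∀ j < m, ∀ t, Function.Periodic (q j t) L) →
      (∀ t ∈ Set.Icc (0:ℝ) T, ∀ x : ℝ,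
        pdt (q 0) t x + pdx (fun s y => f (q 0 s y)) t x
          + σ₀ * pdx (q (m - 1)) t x = 0) →
      (∀ j ∈ Finset.Icc 1 (m / 2 - 1), ∀ t ∈ Set.Icc (0:ℝ) T, ∀ x : ℝ,
        τ * pdt (q j) t x + σ₀ * (-1 : ℝ) ^ j * pdx (q (m - j - 1)) t x
          = σ₀ * (-1 : ℝ) ^ j * q (m - j) t x) →
      (∀ j ∈ Finset.Icc (m / 2) (m - 1), ∀ t ∈ Set.Icc (0:ℝ) T, ∀ x : ℝ,
        τ * pdt (q j) t x + σ₀ * (-1 : ℝ) ^ (j + m - 1) * pdx (q (m - j - 1)) t x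
          = σ₀ * (-1 : ℝ) ^ (j + m - 1) * q (m - j) t x) →
      (∀ j < m, ∀ x : ℝ, q j 0 x = pdx^[j] u 0 x) →
      ∀ t ∈ Set.Icc (0:ℝ) T,
        Real.sqrt (∫ x in (0:ℝ)..L, (u t x - q 0 t x) ^ 2)
          + (∑ j ∈ Finset.Icc 1 (m - 1), Real.sqrt τ *
              Real.sqrt (∫ x in (0:ℝ)..L, (pdx^[j] u t x - q j t x) ^ 2))
          ≤ C * τ := by
  subst hσ
  obtain ⟨M, hM⟩ := hf''
  have hdf : Differentiable ℝ f := hf.differentiable two_ne_zero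
  have hlip : LipschitzWith M.toNNReal (deriv f) :=
    lipschitzWith_of_nnnorm_deriv_le hf.differentiable_deriv_two fun x =>
      NNReal.le_toNNReal_of_coe_le (hM x)
  obtain ⟨C, hC, hbound⟩ := even_order_hyperbolic_convergence_general hm (by lia) hL.le hdf hlip
    ⟨contDiff_infty.mp hu _, huper, hueq⟩
  exact ⟨C, hC, fun τ hτ q hq hqper hq0 hlow hhigh hinit =>
    hbound τ hτ q ⟨hq, hqper, hq0, hlow, hhigh, hinit⟩⟩
end

section
/- Let τ > 0 and a ∈ ℝ, and let A be the real 4×4 matrix ![![a, 0, 0, 1], ![0, 0, −1/τ, 0], ![0, −1/τ, 0, 0], ![1/τ, 0, 0, 0]]. Set λ₁ = −1/τ, λ₂ = 1/τ, λ₃ = (a − √(a² + 4/τ))/2, λ₄ = (a + √(a² + 4/τ))/2, and v₁ = (0, 1, 1, 0), v₂ = (0, −1, 1, 0), v₃ = (τλ₃, 0, 0, 1), v₄ = (τλ₄, 0, 0, 1). Then A vᵢ = λᵢ vᵢ for i = 1, …, 4, and (v₁, v₂, v₃, v₄) is a basis of ℝ⁴; in particular A is diagonalizable over ℝ. -/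
/-!
The flux Jacobian splits into two blocks, on the coordinates `(q₁, q₂)` and `(q₀, q₃)`. The first
has eigenvalues `±1 / τ`; the second has characteristic polynomial `X ^ 2 - a X - 1 / τ`, whose
discriminant `a ^ 2 + 4 / τ` is positive. Eigenvalues of different blocks coincide when
`a = ±(1 - 1 / τ)`, so independence of the eigenvectors is read off from their determinant, a
multiple of the difference of the two roots, rather than from distinctness of the eigenvalues.
-/

open Matrix

section FluxJacobian

variable {K : Type*} [Field K] {R : Type*} [CommRing R]

/-- The flux Jacobian of the hyperbolic approximation at a state with `q₀ = a`, in the variables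
`(q₀, q₁, q₂, q₃)` and with relaxation parameter `τ`, over an arbitrary field. -/
def fluxJacobian (τ a : K) : Matrix (Fin 4) (Fin 4) K :=
  !![a, 0, 0, 1;
     0, 0, -1 / τ, 0;
     0, -1 / τ, 0, 0;
     1 / τ, 0, 0, 0]

/-- The eigenvalues of `fluxJacobian τ a`, in the order of the eigenvectors `fluxEigenvector τ r s`:
`r` and `s` stand for those of the `(q₀, q₃)` block. -/
def fluxEigenvalue (τ r s : K) : Fin 4 → K :=
  ![-1 / τ, 1 / τ, r, s]

/-- The eigenvectors of `fluxJacobian τ a`, with `r` and `s` as in `fluxEigenvalue`; the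
family itself does not involve `a`. -/
def fluxEigenvector (τ r s : R) : Fin 4 → Fin 4 → R :=
  ![![0, 1, 1, 0],
    ![0, -1, 1, 0],
    ![τ * r, 0, 0, 1],
    ![τ * s, 0, 0, 1]]

theorem det_fluxEigenvector (τ r s : R) :
    (of (fluxEigenvector τ r s)).det = 2 * τ * (r - s) := by
  suffices hminors : -(τ * s) + τ * r + (τ * r + -(τ * s)) = 2 * τ * (r - s) by
    simpa [fluxEigenvector, det_succ_row_zero (n := 3), Fin.sum_univ_four, det_fin_three,
      Fin.succAbove] using hminors
  ring

theorem linearIndependent_fluxEigenvector [IsDomain R] [NeZero (2 : R)] {τ r s : R} (hτ : τ ≠ 0)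
    (hrs : r ≠ s) : LinearIndependent R (fluxEigenvector τ r s) := by
  apply linearIndependent_rows_of_det_ne_zero (A := of (fluxEigenvector τ r s))
  rw [det_fluxEigenvector]
  exact mul_ne_zero (mul_ne_zero two_ne_zero hτ) (sub_ne_zero.mpr hrs)

theorem fluxJacobian_mulVec_symm (τ a : K) :
    fluxJacobian τ a *ᵥ ![0, 1, 1, 0] = (-1 / τ) • ![0, 1, 1, 0] := by
  simp [fluxJacobian, -mulVec_cons]

theorem fluxJacobian_mulVec_antisymm (τ a : K) :
    fluxJacobian τ a *ᵥ ![0, -1, 1, 0] = (1 / τ) • ![0, -1, 1, 0] := by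
  simp [fluxJacobian, -mulVec_cons, neg_div]

theorem fluxJacobian_mulVec_of_root {τ a r : K} (hτ : τ ≠ 0) (hr : r ^ 2 = a * r + 1 / τ) :
    fluxJacobian τ a *ᵥ ![τ * r, 0, 0, 1] = r • ![τ * r, 0, 0, 1] := by
  have hfirst : a * (τ * r) + 1 = r * (τ * r) := by
    calc a * (τ * r) + 1 = τ * (a * r + 1 / τ) := by field_simp
      _ = r * (τ * r) := by rw [← hr]; ring
  simp [fluxJacobian, -mulVec_cons, hfirst, hτ]

theorem fluxJacobian_mulVec_fluxEigenvector {τ a r s : K} (hτ : τ ≠ 0)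
    (hr : r ^ 2 = a * r + 1 / τ) (hs : s ^ 2 = a * s + 1 / τ) (i : Fin 4) :
    fluxJacobian τ a *ᵥ fluxEigenvector τ r s i =
      fluxEigenvalue τ r s i • fluxEigenvector τ r s i := by
  fin_cases i
  · exact fluxJacobian_mulVec_symm τ a
  · exact fluxJacobian_mulVec_antisymm τ a
  · exact fluxJacobian_mulVec_of_root hτ hr
  · exact fluxJacobian_mulVec_of_root hτ hs

theorem sq_half_add_eq_of_sq_eq [NeZero (2 : K)] {a c d : K} (hd : d ^ 2 = a ^ 2 + 4 * c) :
    ((a + d) / 2) ^ 2 = a * ((a + d) / 2) + c := by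
  have h2 : (2 : K) ≠ 0 := two_ne_zero
  field_simp
  linear_combination hd

theorem kuramoto_sivashinsky_flux_jacobian_diagonalizable_general [NeZero (2 : K)] {τ a d : K}
    (hτ : τ ≠ 0) (hd : d ^ 2 = a ^ 2 + 4 / τ) (hd₀ : d ≠ 0) :
    (∀ i, fluxJacobian τ a *ᵥ fluxEigenvector τ ((a - d) / 2) ((a + d) / 2) i =
        fluxEigenvalue τ ((a - d) / 2) ((a + d) / 2) i •
          fluxEigenvector τ ((a - d) / 2) ((a + d) / 2) i) ∧
      LinearIndependent K (fluxEigenvector τ ((a - d) / 2) ((a + d) / 2)) ∧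
      Submodule.span K (Set.range (fluxEigenvector τ ((a - d) / 2) ((a + d) / 2))) = ⊤ := by
  have hdisc : d ^ 2 = a ^ 2 + 4 * (1 / τ) := by rw [hd, mul_one_div]
  have hplus : ((a + d) / 2) ^ 2 = a * ((a + d) / 2) + 1 / τ := sq_half_add_eq_of_sq_eq hdisc
  have hminus : ((a - d) / 2) ^ 2 = a * ((a - d) / 2) + 1 / τ := by
    rw [sub_eq_add_neg]
    exact sq_half_add_eq_of_sq_eq (by rwa [neg_sq])
  have hne : (a - d) / 2 ≠ (a + d) / 2 := by
    intro h
    have hdiff : (a + d) / 2 - (a - d) / 2 = d := by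
      rw [← sub_div, add_sub_sub_cancel, add_self_div_two]
    exact hd₀ (by rw [← hdiff, h, sub_self])
  have hli := linearIndependent_fluxEigenvector hτ hne
  exact ⟨fluxJacobian_mulVec_fluxEigenvector hτ hminus hplus, hli,
    hli.span_eq_top_of_card_eq_finrank' (by simp)⟩

end FluxJacobian

/-- The flux Jacobian of the proposed hyperbolic approximation of the
Kuramoto–Sivashinsky equation has the four real eigenvalues `λ₁, …, λ₄` with
eigenvectors `v₁, …, v₄`, which form a basis of `ℝ⁴`; in particular it is
diagonalizable over `ℝ`. -/
theorem kuramoto_sivashinsky_flux_jacobian_diagonalizable (τ a : ℝ) (hτ : 0 < τ)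
    (A : Matrix (Fin 4) (Fin 4) ℝ)
    (hA : A = !![a, 0, 0, 1;
                 0, 0, -1/τ, 0;
                 0, -1/τ, 0, 0;
                 1/τ, 0, 0, 0])
    (l : Fin 4 → ℝ)
    (hl : l = ![-1 / τ,
                1 / τ,
                (a - Real.sqrt (a ^ 2 + 4 / τ)) / 2,
                (a + Real.sqrt (a ^ 2 + 4 / τ)) / 2])
    (v : Fin 4 → Fin 4 → ℝ)
    (hv : v = ![![0, 1, 1, 0],
                ![0, -1, 1, 0],
                ![τ * l 2, 0, 0, 1],
                ![τ * l 3, 0, 0, 1]]) :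
    (∀ i : Fin 4, A.mulVec (v i) = l i • v i) ∧
      LinearIndependent ℝ v ∧
      Submodule.span ℝ (Set.range v) = ⊤ := by
  subst hA hl hv
  have hdisc : 0 < a ^ 2 + 4 / τ := by positivity
  exact kuramoto_sivashinsky_flux_jacobian_diagonalizable_general hτ.ne'
    (Real.sq_sqrt hdisc.le) (Real.sqrt_pos.mpr hdisc).ne'
end
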